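/- arXiv:1011.5351 — 2 statements merged into one kernel-verified Lean document; each statement's English description precedes it below -/
import Mathlib

section
/- Let n = r_1 ≥ ... ≥ r_m and m = c_1 ≥ ... ≥ c_n be consistent line sums with α = (1/2)Σ_{i=1}^m |r_i − b_i|, b_i = #{j : c_j ≥ i}. Then there exists a finite set F₂ ⊆ {1,...,m}×{1,...,n} with these row and column sums such that L_h(F₂) ≤ 2n + 2α and L_v(F₂) ≤ 2m + 2α. -/
open Finset

/-- Number of points of `F` in row `i`. -/
def rowSum (F : Finset (ℤ × ℤ)) (i : ℤ) : ℕ := (F.filter fun p => p.1 = i).card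

/-- Number of points of `F` in column `j`. -/
def colSum (F : Finset (ℤ × ℤ)) (j : ℤ) : ℕ := (F.filter fun p => p.2 = j).card

/-- Length of the horizontal boundary of `F`: the number of vertically adjacent pairs
of lattice points with exactly one of the two points in `F`. -/
def Lh (F : Finset (ℤ × ℤ)) : ℕ :=
  ((F ∪ F.image fun p => (p.1 - 1, p.2)).filter
    fun p => decide (p ∈ F) ≠ decide ((p.1 + 1, p.2) ∈ F)).card

/-- Length of the vertical boundary of `F`: the number of horizontally adjacent pairs
of lattice points with exactly one of the two points in `F`. -/
def Lv (F : Finset (ℤ × ℤ)) : ℕ :=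
  ((F ∪ F.image fun p => (p.1, p.2 - 1)).filter
    fun p => decide (p ∈ F) ≠ decide ((p.1, p.2 + 1) ∈ F)).card

def ConjP (r e : ℕ → ℕ) : Prop := ∀ i j, j < r i ↔ i < e j

lemma ConjP.anti_left {r e : ℕ → ℕ} (h : ConjP r e) : Antitone r := by
  intro i i' hii
  by_contra hlt
  push Not at hlt
  have h1 := (h i' (r i)).1 hlt
  have h2 := (h i (r i)).2 (by omega)
  omega

lemma ConjP.anti_right {r e : ℕ → ℕ} (h : ConjP r e) : Antitone e := by
  apply ConjP.anti_left (e := r)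
  intro i j
  exact (h j i).symm

lemma conj_exists (m : ℕ) (r : ℕ → ℕ) (hr : Antitone r) (h0 : ∀ i, m ≤ i → r i = 0) :
    ∃ e, ConjP r e ∧ ∀ j, e j ≤ m := by
  refine ⟨fun j => ((range m).filter fun i => j < r i).card, ?_, ?_⟩
  · intro i j
    constructor
    · intro hj
      have hsub : range (i + 1) ⊆ (range m).filter fun i => j < r i := by
        intro x hx
        have hx' : x ≤ i := by simpa [Nat.lt_succ_iff] using hx
        have := hr hx'
        simp only [mem_filter, mem_range]
        refine ⟨?_, by omega⟩
        by_contra hm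
        have := h0 x (by omega)
        omega
      have := card_le_card hsub
      simp only [card_range] at this
      show i < ((range m).filter fun i => j < r i).card
      omega
    · intro hi
      by_contra hj
      have hsub : ((range m).filter fun i => j < r i) ⊆ range i := by
        intro x hx
        simp only [mem_filter, mem_range] at hx ⊢
        by_contra hxi
        have := hr (show i ≤ x by omega)
        omega
      have := card_le_card hsub
      simp only [card_range] at this
      have hi' : i < ((range m).filter fun i => j < r i).card := hi
      omega
  · intro j
    have := card_filter_le (range m) (fun i => j < r i)
    simpa using this

lemma conj_sum (m n : ℕ) (r e : ℕ → ℕ) (h : ConjP r e) (hr : ∀ i, r i ≤ n) (he : ∀ j, e j ≤ m) :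
    ∑ i ∈ range m, r i = ∑ j ∈ range n, e j := by
  have h1 : ∀ i, r i = ∑ j ∈ range n, if j < r i then 1 else 0 := by
    intro i
    rw [← card_filter]
    have : (range n).filter (fun j => j < r i) = range (r i) := by
      ext x; simp only [mem_filter, mem_range]; have := hr i; omega
    rw [this, card_range]
  have h2 : ∀ j, e j = ∑ i ∈ range m, if j < r i then 1 else 0 := by
    intro j
    rw [← card_filter]
    have : (range m).filter (fun i => j < r i) = range (e j) := by
      ext x; simp only [mem_filter, mem_range]; have := he j; rw [h x j]; omega
    rw [this, card_range]
  rw [sum_congr rfl (fun i _ => h1 i), sum_congr rfl (fun j _ => h2 j), sum_comm]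

/-- greedy filling of capacities `d` from the left with a total of `t`. -/
def fillF (d : ℕ → ℕ) (t j : ℕ) : ℕ := min (d j) (t - ∑ i ∈ range j, d i)

lemma fill_le (d : ℕ → ℕ) (t j : ℕ) : fillF d t j ≤ d j := min_le_left _ _

lemma sum_fill (d : ℕ → ℕ) (t k : ℕ) :
    ∑ j ∈ range k, fillF d t j = min t (∑ j ∈ range k, d j) := by
  induction k with
  | zero => simp
  | succ k ih =>
    rw [sum_range_succ, sum_range_succ, ih]
    unfold fillF
    omega

lemma fill_full (d : ℕ → ℕ) (t i j : ℕ) (hij : i < j) (h : fillF d t j ≠ 0) :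
    fillF d t i = d i := by
  have h1 : ∑ x ∈ range (i + 1), d x ≤ ∑ x ∈ range j, d x :=
    sum_le_sum_of_subset (range_subset_range.2 hij)
  rw [sum_range_succ] at h1
  unfold fillF at *
  omega

lemma fill_partial (d : ℕ → ℕ) (t j k : ℕ) (hjk : j < k) (h : fillF d t j ≠ d j) :
    t < ∑ i ∈ range k, d i := by
  have h1 : ∑ x ∈ range (j + 1), d x ≤ ∑ x ∈ range k, d x :=
    sum_le_sum_of_subset (range_subset_range.2 hjk)
  rw [sum_range_succ] at h1
  unfold fillF at *
  omega

/-- There is at most one partially filled place. -/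
lemma fill_unique (d : ℕ → ℕ) (t : ℕ) :
    ∃ k, ∀ j, fillF d t j ≠ 0 → fillF d t j = d j ∨ j = k := by
  by_cases hex : ∃ k, fillF d t k ≠ 0 ∧ fillF d t k ≠ d k
  · obtain ⟨k, hk0, hkd⟩ := hex
    refine ⟨k, fun j hj => ?_⟩
    by_contra hcon
    push Not at hcon
    rcases lt_or_gt_of_ne hcon.2 with hlt | hlt
    · exact hcon.1 (fill_full d t j k hlt hk0)
    · exact hkd (fill_full d t k j hlt hj)
  · push Not at hex
    exact ⟨0, fun j hj => Or.inl (hex j hj)⟩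

lemma assign_basic (s : Finset ℕ) : ∀ (I : Finset ℕ) (κ : ℕ → ℕ), ∑ j ∈ s, κ j = I.card →
    ∃ y : ℕ → ℕ, (∀ i ∈ I, y i ∈ s) ∧ ∀ j ∈ s, (I.filter fun i => y i = j).card = κ j := by
  induction s using Finset.induction_on with
  | empty =>
    intro I κ h
    have : I = ∅ := by
      rw [← card_eq_zero, ← h]; simp
    subst this
    exact ⟨fun _ => 0, by simp, by simp⟩
  | insert a s ha ih =>
    intro I κ h
    rw [sum_insert ha] at h
    obtain ⟨A, hA, hAc⟩ := exists_subset_card_eq (show κ a ≤ I.card by omega)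
    have hc := card_sdiff_of_subset hA
    obtain ⟨y, hy1, hy2⟩ := ih (I \ A) κ (by omega)
    refine ⟨fun i => if i ∈ A then a else y i, ?_, ?_⟩
    · intro i hi
      by_cases hiA : i ∈ A
      · simp [hiA]
      · simp only [hiA, if_false]
        exact mem_insert_of_mem (hy1 i (mem_sdiff.2 ⟨hi, hiA⟩))
    · intro j hj
      by_cases hja : j = a
      · subst hja
        rw [← hAc]
        congr 1
        ext i
        simp only [mem_filter]
        constructor
        · rintro ⟨hi, h1⟩
          by_contra hiA
          rw [if_neg hiA] at h1
          have := hy1 i (mem_sdiff.2 ⟨hi, hiA⟩)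
          rw [h1] at this
          exact ha this
        · intro hi
          exact ⟨hA hi, by rw [if_pos hi]⟩
      · have hjs : j ∈ s := by
          rcases mem_insert.1 hj with h1 | h1
          · exact absurd h1 hja
          · exact h1
        rw [← hy2 j hjs]
        congr 1
        ext i
        simp only [mem_filter, mem_sdiff]
        constructor
        · rintro ⟨hi, h1⟩
          by_cases hiA : i ∈ A
          · rw [if_pos hiA] at h1; exact absurd h1.symm hja
          · rw [if_neg hiA] at h1; exact ⟨⟨hi, hiA⟩, h1⟩
        · rintro ⟨⟨hi, hiA⟩, h1⟩
          exact ⟨hi, by rw [if_neg hiA]; exact h1⟩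

lemma assign_ok (s I : Finset ℕ) (κ : ℕ → ℕ) (ok : ℕ → ℕ → Prop) (k : ℕ)
    (hsum : ∑ j ∈ s, κ j = I.card)
    (h : ∀ j ∈ s, κ j ≠ 0 → (∀ i ∈ I, ok i j) ∨
      (j = k ∧ ∃ A ⊆ I, A.card = κ j ∧ ∀ i ∈ A, ok i j)) :
    ∃ y : ℕ → ℕ, (∀ i ∈ I, y i ∈ s ∧ ok i (y i)) ∧
      ∀ j ∈ s, (I.filter fun i => y i = j).card = κ j := by
  by_cases hk : k ∈ s ∧ κ k ≠ 0
  · obtain ⟨hks, hk0⟩ := hk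
    obtain ⟨A, hA, hAc, hAok⟩ : ∃ A ⊆ I, A.card = κ k ∧ ∀ i ∈ A, ok i k := by
      rcases h k hks hk0 with h1 | h1
      · have := single_le_sum (f := κ) (fun _ _ => Nat.zero_le _) hks
        obtain ⟨A, hA, hAc⟩ := exists_subset_card_eq (show κ k ≤ I.card by omega)
        exact ⟨A, hA, hAc, fun i hi => h1 i (hA hi)⟩
      · exact h1.2
    have hc := card_sdiff_of_subset hA
    have hsum' : ∑ j ∈ s.erase k, κ j = (I \ A).card := by
      have := add_sum_erase s κ hks
      omega
    obtain ⟨y, hy1, hy2⟩ := assign_basic (s.erase k) (I \ A) κ hsum'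
    refine ⟨fun i => if i ∈ A then k else y i, ?_, ?_⟩
    · intro i hi
      by_cases hiA : i ∈ A
      · simp only [hiA, if_true]
        exact ⟨hks, hAok i hiA⟩
      · simp only [hiA, if_false]
        have hm : i ∈ I \ A := mem_sdiff.2 ⟨hi, hiA⟩
        have hys := hy1 i hm
        have hyne := ne_of_mem_erase hys
        have hys' := mem_of_mem_erase hys
        refine ⟨hys', ?_⟩
        have hpos : κ (y i) ≠ 0 := by
          rw [← hy2 _ hys]
          exact card_ne_zero_of_mem (mem_filter.2 ⟨hm, rfl⟩)
        rcases h _ hys' hpos with h1 | h1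
        · exact h1 i hi
        · exact absurd h1.1 hyne
    · intro j hj
      by_cases hja : j = k
      · subst hja
        rw [← hAc]
        congr 1
        ext i
        simp only [mem_filter]
        constructor
        · rintro ⟨hi, h1⟩
          by_contra hiA
          rw [if_neg hiA] at h1
          have := hy1 i (mem_sdiff.2 ⟨hi, hiA⟩)
          exact (ne_of_mem_erase this) h1
        · intro hi
          exact ⟨hA hi, by rw [if_pos hi]⟩
      · have hjs : j ∈ s.erase k := mem_erase.2 ⟨hja, hj⟩
        rw [← hy2 j hjs]
        congr 1
        ext i
        simp only [mem_filter, mem_sdiff]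
        constructor
        · rintro ⟨hi, h1⟩
          by_cases hiA : i ∈ A
          · rw [if_pos hiA] at h1; exact absurd h1.symm hja
          · rw [if_neg hiA] at h1; exact ⟨⟨hi, hiA⟩, h1⟩
        · rintro ⟨⟨hi, hiA⟩, h1⟩
          exact ⟨hi, by rw [if_neg hiA]; exact h1⟩
  · obtain ⟨y, hy1, hy2⟩ := assign_basic s I κ hsum
    refine ⟨y, fun i hi => ⟨hy1 i hi, ?_⟩, hy2⟩
    have hpos : κ (y i) ≠ 0 := by
      rw [← hy2 _ (hy1 i hi)]
      exact card_ne_zero_of_mem (mem_filter.2 ⟨hi, rfl⟩)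
    rcases h _ (hy1 i hi) hpos with h1 | h1
    · exact h1 i hi
    · exfalso
      apply hk
      rw [← h1.1]
      exact ⟨hy1 i hi, hpos⟩

structure Sol (r e c : ℕ → ℕ) (F : Finset (ℕ × ℕ)) : Prop where
  row : ∀ i, (F.filter fun p => p.1 = i).card = r i
  col : ∀ j, (F.filter fun p => p.2 = j).card = c j
  outp : ∀ i j, (i, j) ∈ F → r i ≤ j → e j < c j
  inp : ∀ i j, (i, j) ∉ F → j < r i → c j < e j

/-- the set of pairs `(i, y i)` -/
def graphF (I : Finset ℕ) (y : ℕ → ℕ) : Finset (ℕ × ℕ) := I.image fun i => (i, y i)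

lemma mem_graphF (I : Finset ℕ) (y : ℕ → ℕ) (i j : ℕ) :
    (i, j) ∈ graphF I y ↔ i ∈ I ∧ y i = j := by
  unfold graphF
  simp only [mem_image, Prod.mk.injEq]
  constructor
  · rintro ⟨a, ha, rfl, rfl⟩; exact ⟨ha, rfl⟩
  · rintro ⟨h1, h2⟩; exact ⟨i, h1, rfl, h2⟩

lemma card_graphF (I : Finset ℕ) (y : ℕ → ℕ) : (graphF I y).card = I.card := by
  unfold graphF
  apply card_image_of_injective
  intro a b hab
  exact (Prod.mk.inj hab).1

lemma row_graphF (I : Finset ℕ) (y : ℕ → ℕ) (i : ℕ) :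
    ((graphF I y).filter fun p => p.1 = i).card = if i ∈ I then 1 else 0 := by
  split_ifs with h
  · rw [card_eq_one]
    refine ⟨(i, y i), ?_⟩
    ext ⟨a, b⟩
    simp only [mem_filter, mem_graphF, mem_singleton, Prod.mk.injEq]
    constructor
    · rintro ⟨⟨_, h2⟩, rfl⟩; exact ⟨rfl, h2.symm⟩
    · rintro ⟨rfl, rfl⟩; exact ⟨⟨h, rfl⟩, rfl⟩
  · rw [card_eq_zero, filter_eq_empty_iff]
    rintro ⟨a, b⟩ hab rfl
    exact h ((mem_graphF _ _ _ _).1 hab).1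

lemma col_graphF (I : Finset ℕ) (y : ℕ → ℕ) (j : ℕ) :
    ((graphF I y).filter fun p => p.2 = j).card = (I.filter fun i => y i = j).card := by
  have : (graphF I y).filter (fun p => p.2 = j) = graphF (I.filter fun i => y i = j) y := by
    ext ⟨a, b⟩
    simp only [mem_filter, mem_graphF]
    constructor
    · rintro ⟨⟨h1, h2⟩, h3⟩; exact ⟨⟨h1, h2.trans h3⟩, h2⟩
    · rintro ⟨⟨h1, h2⟩, h3⟩; exact ⟨⟨h1, h3⟩, h3.symm.trans h2⟩
  rw [this, card_graphF]

/-- number of holes in column `j` among rows in `I` -/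
lemma holes_le (r e c : ℕ → ℕ) (F : Finset (ℕ × ℕ)) (hS : Sol r e c F) (hC : ConjP r e)
    (j : ℕ) (hj : c j ≤ e j) (I : Finset ℕ) (hI : ∀ i ∈ I, j < r i) :
    (I.filter fun i => (i, j) ∉ F).card + c j ≤ e j := by
  have h1 : (F.filter fun p => p.2 = j).card =
      ((range (e j)).filter fun i => (i, j) ∈ F).card := by
    symm
    apply card_bij (fun i _ => (i, j))
    · intro i hi; simp only [mem_filter] at hi ⊢; exact ⟨hi.2, trivial⟩
    · intro a _ b _ hab; exact (Prod.mk.inj hab).1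
    · rintro ⟨a, b⟩ hab
      simp only [mem_filter] at hab
      obtain ⟨hab, rfl⟩ := hab
      refine ⟨a, ?_, rfl⟩
      simp only [mem_filter, mem_range]
      refine ⟨?_, hab⟩
      by_contra hcon
      have h2 : r a ≤ b := by
        by_contra h3
        exact hcon ((hC a b).1 (by omega))
      have := hS.outp a b hab h2
      omega
  rw [hS.col] at h1
  have h2 := card_filter_add_card_filter_not (s := range (e j)) (fun i => (i, j) ∈ F)
  rw [card_range] at h2
  have h3 : (I.filter fun i => (i, j) ∉ F) ⊆ (range (e j)).filter fun i => ¬ (i, j) ∈ F := by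
    intro i hi
    simp only [mem_filter, mem_range] at hi ⊢
    exact ⟨(hC i j).1 (hI i hi.1), hi.2⟩
  have := card_le_card h3
  omega

lemma extras_le (r e c : ℕ → ℕ) (F : Finset (ℕ × ℕ)) (hS : Sol r e c F) (hC : ConjP r e)
    (j : ℕ) (hj : e j ≤ c j) (I : Finset ℕ) (hI : ∀ i ∈ I, r i ≤ j) :
    (I.filter fun i => (i, j) ∈ F).card + e j ≤ c j := by
  have hd : Disjoint (I.filter fun i => (i, j) ∈ F) (range (e j)) := by
    rw [disjoint_left]
    intro i hi hi2
    simp only [mem_filter, mem_range] at hi hi2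
    have := (hC i j).2 hi2
    have := hI i hi.1
    omega
  have hsub : ((I.filter fun i => (i, j) ∈ F) ∪ range (e j)).image (fun i => (i, j)) ⊆
      F.filter fun p => p.2 = j := by
    intro p hp
    simp only [mem_image, mem_union, mem_filter, mem_range] at hp ⊢
    obtain ⟨i, hi, rfl⟩ := hp
    refine ⟨?_, rfl⟩
    rcases hi with hi | hi
    · exact hi.2
    · by_contra hcon
      have := hS.inp i j hcon ((hC i j).2 hi)
      omega
  have h1 := card_le_card hsub
  rw [card_image_of_injective _ (fun a b hab => (Prod.mk.inj hab).1), card_union_of_disjoint hd,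
    card_range, hS.col] at h1
  exact h1

lemma stepB (r e c r' e' c' κ : ℕ → ℕ) (F' : Finset (ℕ × ℕ)) (I s : Finset ℕ) (k : ℕ)
    (hS : Sol r' e' c' F') (hC' : ConjP r' e')
    (hr : ∀ i, r' i = r i + if i ∈ I then 1 else 0)
    (hc : ∀ j, c' j = c j + κ j) (hκ : ∀ j, j ∉ s → κ j = 0)
    (hsum : ∑ j ∈ s, κ j = I.card)
    (hs : ∀ j ∈ s, e' j = e j ∧ c' j ≤ e j)
    (hfull : ∀ j ∈ s, κ j ≠ 0 → c' j = e j ∨ (j = k ∧ e j ≤ c j + I.card))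
    (hI : ∀ i ∈ I, (∀ j ∈ s, j < r i) ∧ e (r i) < c (r i))
    (he : ∀ j, e j ≤ e' j) (he' : ∀ j, e' j ≠ e j → e' j ≤ c' j) :
    ∃ F, Sol r e c F ∧ ∀ G, (symmDiff F G).card ≤ (symmDiff F' G).card + I.card := by
  obtain ⟨y, hy1, hy2⟩ := assign_ok s I κ (fun i j => (i, j) ∈ F') k hsum (by
    intro j hj hj0
    have hIj : ∀ i ∈ I, j < r' i := by
      intro i hi; have := (hI i hi).1 j hj; rw [hr i]; omega
    have hh := holes_le r' e' c' F' hS hC' j (by rw [(hs j hj).1]; exact (hs j hj).2) I hIj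
    rw [(hs j hj).1] at hh
    rcases hfull j hj hj0 with h1 | ⟨h1, h2⟩
    · left
      intro i hi
      by_contra hcon
      have : (I.filter fun i => (i, j) ∉ F').card = 0 := by omega
      rw [card_eq_zero, filter_eq_empty_iff] at this
      exact this hi hcon
    · right
      refine ⟨h1, ?_⟩
      have h3 := card_filter_add_card_filter_not (s := I) (fun i => (i, j) ∈ F')
      have h4 := hc j
      obtain ⟨A, hA, hAc⟩ := exists_subset_card_eq
        (show κ j ≤ (I.filter fun i => (i, j) ∈ F').card by omega)
      exact ⟨A, hA.trans (filter_subset _ _), hAc, fun i hi => (mem_filter.1 (hA hi)).2⟩)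
  have hYsub : graphF I y ⊆ F' := by
    rintro ⟨a, b⟩ hab
    obtain ⟨h1, rfl⟩ := (mem_graphF _ _ _ _).1 hab
    exact (hy1 a h1).2
  have hfil : ∀ (p : ℕ × ℕ → Prop) [DecidablePred p],
      ((F' \ graphF I y).filter p).card + ((graphF I y).filter p).card = (F'.filter p).card := by
    intro p _
    rw [← card_union_of_disjoint]
    · congr 1
      rw [← filter_union, sdiff_union_of_subset hYsub]
    · exact disjoint_filter_filter disjoint_sdiff_self_left
  refine ⟨F' \ graphF I y, ⟨?_, ?_, ?_, ?_⟩, ?_⟩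
  · intro i
    have h1 := hfil (fun p => p.1 = i)
    rw [row_graphF, hS.row, hr i] at h1
    omega
  · intro j
    have h1 := hfil (fun p => p.2 = j)
    rw [col_graphF, hS.col, hc j] at h1
    have h2 : (I.filter fun i => y i = j).card = κ j := by
      by_cases hj : j ∈ s
      · exact hy2 j hj
      · rw [hκ j hj, card_eq_zero, filter_eq_empty_iff]
        intro i hi hyi
        exact hj (hyi ▸ (hy1 i hi).1)
    omega
  · intro i j hij hrij
    have hF' := (mem_sdiff.1 hij).1
    by_cases h1 : r' i ≤ j
    · have h2 := hS.outp i j hF' h1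
      by_cases hj : j ∈ s
      · have := hs j hj; omega
      · have := hκ j hj; have := hc j; have := he j; omega
    · have h2 := hr i
      by_cases hi : i ∈ I
      · rw [if_pos hi] at h2
        have : j = r i := by omega
        rw [this]; exact (hI i hi).2
      · rw [if_neg hi] at h2; omega
  · intro i j hij hrij
    by_cases hF : (i, j) ∈ F'
    · have hY : (i, j) ∈ graphF I y := by
        by_contra hcon; exact hij (mem_sdiff.2 ⟨hF, hcon⟩)
      obtain ⟨h1, rfl⟩ := (mem_graphF _ _ _ _).1 hY
      have h2 := (hy1 i h1).1
      have h3 : κ (y i) ≠ 0 := by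
        rw [← hy2 _ h2]
        exact card_ne_zero_of_mem (mem_filter.2 ⟨h1, rfl⟩)
      have := hs _ h2; have := hc (y i); omega
    · have h2 := hS.inp i j hF (by have := hr i; omega)
      have h3 := hc j
      by_cases h4 : e' j = e j
      · omega
      · have := he' j h4; omega
  · intro G
    calc (symmDiff (F' \ graphF I y) G).card ≤ (symmDiff F' G ∪ graphF I y).card := by
          apply card_le_card
          intro p hp
          simp only [mem_symmDiff, mem_sdiff, mem_union] at hp ⊢
          tauto
      _ ≤ _ := by
          have := card_union_le (symmDiff F' G) (graphF I y)
          rw [card_graphF] at this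
          exact this

lemma stepA (r e c r' e' c' κ : ℕ → ℕ) (F' : Finset (ℕ × ℕ)) (I s : Finset ℕ) (k : ℕ)
    (hS : Sol r' e' c' F') (hC' : ConjP r' e')
    (hr : ∀ i, r i = r' i + if i ∈ I then 1 else 0)
    (hc : ∀ j, c j = c' j + κ j) (hκ : ∀ j, j ∉ s → κ j = 0)
    (hsum : ∑ j ∈ s, κ j = I.card)
    (hs : ∀ j ∈ s, e' j = e j ∧ e j ≤ c' j)
    (hfull : ∀ j ∈ s, κ j ≠ 0 → c' j = e j ∨ (j = k ∧ c j ≤ e j + I.card))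
    (hI : ∀ i ∈ I, (∀ j ∈ s, r i ≤ j) ∧ c (r' i) < e (r' i))
    (he : ∀ j, e' j ≤ e j) (he' : ∀ j, e' j ≠ e j → c' j ≤ e' j) :
    ∃ F, Sol r e c F ∧ ∀ G, (symmDiff F G).card ≤ (symmDiff F' G).card + I.card := by
  obtain ⟨y, hy1, hy2⟩ := assign_ok s I κ (fun i j => (i, j) ∉ F') k hsum (by
    intro j hj hj0
    have hIj : ∀ i ∈ I, r' i ≤ j := by
      intro i hi; have := (hI i hi).1 j hj; have := hr i; omega
    have hh := extras_le r' e' c' F' hS hC' j (by rw [(hs j hj).1]; exact (hs j hj).2) I hIj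
    rw [(hs j hj).1] at hh
    rcases hfull j hj hj0 with h1 | ⟨h1, h2⟩
    · left
      intro i hi
      by_contra hcon
      have : (I.filter fun i => (i, j) ∈ F').card = 0 := by omega
      rw [card_eq_zero, filter_eq_empty_iff] at this
      exact this hi hcon
    · right
      refine ⟨h1, ?_⟩
      have h3 := card_filter_add_card_filter_not (s := I) (fun i => (i, j) ∈ F')
      have h4 := hc j
      obtain ⟨A, hA, hAc⟩ := exists_subset_card_eq
        (show κ j ≤ (I.filter fun i => ¬ (i, j) ∈ F').card by omega)
      exact ⟨A, hA.trans (filter_subset _ _), hAc, fun i hi => (mem_filter.1 (hA hi)).2⟩)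
  have hYdis : Disjoint F' (graphF I y) := by
    rw [disjoint_right]
    rintro ⟨a, b⟩ hab
    obtain ⟨h1, rfl⟩ := (mem_graphF _ _ _ _).1 hab
    exact (hy1 a h1).2
  have hfil : ∀ (p : ℕ × ℕ → Prop) [DecidablePred p],
      ((F' ∪ graphF I y).filter p).card = (F'.filter p).card + ((graphF I y).filter p).card := by
    intro p _
    rw [filter_union, card_union_of_disjoint]
    exact disjoint_filter_filter hYdis
  refine ⟨F' ∪ graphF I y, ⟨?_, ?_, ?_, ?_⟩, ?_⟩
  · intro i
    have h1 := hfil (fun p => p.1 = i)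
    rw [row_graphF, hS.row] at h1
    rw [h1, hr i]
  · intro j
    have h1 := hfil (fun p => p.2 = j)
    rw [col_graphF, hS.col] at h1
    have h2 : (I.filter fun i => y i = j).card = κ j := by
      by_cases hj : j ∈ s
      · exact hy2 j hj
      · rw [hκ j hj, card_eq_zero, filter_eq_empty_iff]
        intro i hi hyi
        exact hj (hyi ▸ (hy1 i hi).1)
    rw [h1, h2, hc j]
  · intro i j hij hrij
    rcases mem_union.1 hij with hF | hY
    · have h2 := hS.outp i j hF (by have := hr i; omega)
      have h3 := hc j
      by_cases h4 : e' j = e j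
      · omega
      · have := he' j h4; omega
    · obtain ⟨h1, rfl⟩ := (mem_graphF _ _ _ _).1 hY
      have h2 := (hy1 i h1).1
      have h3 : κ (y i) ≠ 0 := by
        rw [← hy2 _ h2]
        exact card_ne_zero_of_mem (mem_filter.2 ⟨h1, rfl⟩)
      have := hs _ h2; have := hc (y i); omega
  · intro i j hij hrij
    have hF' : (i, j) ∉ F' := fun h => hij (mem_union_left _ h)
    by_cases h1 : j < r' i
    · have h2 := hS.inp i j hF' h1
      by_cases hj : j ∈ s
      · have := hs j hj; omega
      · have := hκ j hj; have := hc j; have := he j; omega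
    · have h2 := hr i
      by_cases hi : i ∈ I
      · rw [if_pos hi] at h2
        have : j = r' i := by omega
        rw [this]; exact (hI i hi).2
      · rw [if_neg hi] at h2; omega
  · intro G
    calc (symmDiff (F' ∪ graphF I y) G).card ≤ (symmDiff F' G ∪ graphF I y).card := by
          apply card_le_card
          intro p hp
          simp only [mem_symmDiff, mem_union] at hp ⊢
          tauto
      _ ≤ _ := by
          have := card_union_le (symmDiff F' G) (graphF I y)
          rw [card_graphF] at this
          exact this

structure Dat (m n : ℕ) (r e c : ℕ → ℕ) : Prop where
  conj : ConjP r e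
  ac : Antitone c
  rn : ∀ i, r i ≤ n
  em : ∀ j, e j ≤ m
  cm : ∀ j, c j ≤ m
  c0 : ∀ j, n ≤ j → c j = 0
  dom : ∀ t, ∑ j ∈ range t, c j ≤ ∑ j ∈ range t, e j
  tot : ∑ j ∈ range n, c j = ∑ j ∈ range n, e j

lemma Dat.e0 {m n : ℕ} {r e c : ℕ → ℕ} (D : Dat m n r e c) (j : ℕ) (hj : n ≤ j) : e j = 0 := by
  by_contra h
  have := (D.conj 0 j).2 (by omega)
  have := D.rn 0
  omega

lemma Dat.r0 {m n : ℕ} {r e c : ℕ → ℕ} (D : Dat m n r e c) (i : ℕ) (hi : m ≤ i) : r i = 0 := by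
  by_contra h
  have := (D.conj i 0).1 (by omega)
  have := D.em 0
  omega

/-- the total discrepancy -/
def disc (n : ℕ) (e c : ℕ → ℕ) : ℕ := ∑ j ∈ range n, ((e j - c j) + (c j - e j))

lemma dom_step (J J2 n : ℕ) (e c e' c' : ℕ → ℕ) (hJ2 : J2 ≤ n)
    (h1 : ∀ j, j < J → c' j ≤ e' j) (h2 : ∀ j, J ≤ j → j < J2 → e' j ≤ c' j)
    (h3 : ∀ j, J2 ≤ j → e' j = e j ∧ c' j = c j)
    (h4 : ∑ j ∈ range n, e' j + ∑ j ∈ range n, c j = ∑ j ∈ range n, e j + ∑ j ∈ range n, c' j)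
    (dom : ∀ t, ∑ j ∈ range t, c j ≤ ∑ j ∈ range t, e j) (t : ℕ) :
    ∑ j ∈ range t, c' j ≤ ∑ j ∈ range t, e' j := by
  have key : ∀ t, J2 ≤ t → (∑ j ∈ range t, e' j = ∑ j ∈ range J2, e' j + ∑ j ∈ Ico J2 t, e j) ∧
      (∑ j ∈ range t, c' j = ∑ j ∈ range J2, c' j + ∑ j ∈ Ico J2 t, c j) ∧
      (∑ j ∈ range t, e j = ∑ j ∈ range J2, e j + ∑ j ∈ Ico J2 t, e j) ∧
      (∑ j ∈ range t, c j = ∑ j ∈ range J2, c j + ∑ j ∈ Ico J2 t, c j) := by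
    intro t ht
    refine ⟨?_, ?_, (sum_range_add_sum_Ico _ ht).symm, (sum_range_add_sum_Ico _ ht).symm⟩
    · rw [← sum_range_add_sum_Ico _ ht]
      congr 1
      exact sum_congr rfl fun j hj => (h3 j (mem_Ico.1 hj).1).1
    · rw [← sum_range_add_sum_Ico _ ht]
      congr 1
      exact sum_congr rfl fun j hj => (h3 j (mem_Ico.1 hj).1).2
  have big : ∀ t, J2 ≤ t → ∑ j ∈ range t, c' j ≤ ∑ j ∈ range t, e' j := by
    intro t ht
    obtain ⟨a1, a2, a3, a4⟩ := key t ht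
    obtain ⟨b1, b2, b3, b4⟩ := key n hJ2
    have := dom t
    omega
  rcases le_or_gt t J with ht | ht
  · exact sum_le_sum fun j hj => h1 j (by have := mem_range.1 hj; omega)
  · rcases le_or_gt J2 t with ht2 | ht2
    · exact big t ht2
    · have b := big J2 le_rfl
      rw [← sum_range_add_sum_Ico _ ht2.le, ← sum_range_add_sum_Ico _ ht2.le] at b
      have : ∑ j ∈ Ico t J2, e' j ≤ ∑ j ∈ Ico t J2, c' j :=
        sum_le_sum fun j hj => by
          have := mem_Ico.1 hj
          exact h2 j (by omega) this.2
      omega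

structure Loc (n : ℕ) (e c : ℕ → ℕ) (J J2 : ℕ) : Prop where
  lt : J < J2
  le : J2 ≤ n
  neg : ∀ j, j < J → c j ≤ e j
  at_J : e J < c J
  pos : ∀ j, J ≤ j → j < J2 → e j ≤ c j
  at_J2 : c J2 ≤ e J2
  ex : ∃ j, j < J ∧ c j < e j

lemma loc_exists {m n : ℕ} {r e c : ℕ → ℕ} (D : Dat m n r e c) (hne : ¬ ∀ j, e j = c j) :
    ∃ J J2, Loc n e c J J2 := by
  have hex : ∃ j, e j < c j := by
    by_contra hcon
    push Not at hcon
    apply hne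
    intro j
    by_cases hj : j < n
    · have := (sum_eq_sum_iff_of_le (s := range n) (fun j _ => hcon j)).1 D.tot j (mem_range.2 hj)
      exact this.symm
    · rw [D.e0 j (by omega), D.c0 j (by omega)]
  classical
  set J := Nat.find hex with hJdef
  have hJ : e J < c J := Nat.find_spec hex
  have hJmin : ∀ j, j < J → c j ≤ e j := by
    intro j hj
    have := Nat.find_min hex hj
    omega
  have hJn : J < n := by
    by_contra h
    have := D.c0 J (by omega)
    omega
  have hex2 : ∃ t, J < t ∧ (n ≤ t ∨ c t < e t) := ⟨n, hJn, Or.inl le_rfl⟩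
  set J2 := Nat.find hex2 with hJ2def
  have hJ2 := Nat.find_spec hex2
  rw [← hJ2def] at hJ2
  refine ⟨J, J2, hJ2.1, Nat.find_min' hex2 ⟨hJn, Or.inl le_rfl⟩, hJmin, hJ, ?_, ?_, ?_⟩
  · intro j h1 h2
    rcases eq_or_lt_of_le h1 with h1 | h1
    · subst h1; omega
    · have := Nat.find_min hex2 h2
      push Not at this
      exact (this h1).2
  · rcases hJ2.2 with h | h
    · rw [D.c0 _ h]; omega
    · omega
  · by_contra hcon
    push Not at hcon
    have h1 := D.dom (J + 1)
    rw [sum_range_succ, sum_range_succ] at h1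
    have h2 : ∑ j ∈ range J, e j ≤ ∑ j ∈ range J, c j :=
      sum_le_sum fun j hj => hcon j (mem_range.1 hj)
    omega

lemma cut_exists (I : Finset ℕ) (t : ℕ) (ht : t ≤ I.card) :
    ∃ s, (I.filter fun i => i < s).card = t := by
  have hex : ∃ s, t ≤ (I.filter fun i => i < s).card := by
    refine ⟨I.sup id + 1, ?_⟩
    rw [filter_true_of_mem]
    · exact ht
    · intro i hi
      have := le_sup (f := id) hi
      simp only [id] at this
      omega
  classical
  have h1 := Nat.find_spec hex
  have h2 : ∀ s, s < Nat.find hex → (I.filter fun i => i < s).card < t := by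
    intro s hs
    have := Nat.find_min hex hs
    omega
  refine ⟨Nat.find hex, le_antisymm ?_ h1⟩
  generalize Nat.find hex = s at h1 h2
  cases s with
  | zero => simp
  | succ k =>
    have h3 := h2 k (by omega)
    have h4 : (I.filter fun i => i < k + 1) ⊆ insert k (I.filter fun i => i < k) := by
      intro i hi
      simp only [mem_insert, mem_filter] at hi ⊢
      have := hi.1
      by_cases h : i = k
      · exact Or.inl h
      · exact Or.inr ⟨hi.1, by omega⟩
    have h5 := card_le_card h4
    have h6 := card_insert_le k (I.filter fun i => i < k)
    omega

lemma cut_exists_top (I : Finset ℕ) (t : ℕ) (ht : t ≤ I.card) :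
    ∃ s, (I.filter fun i => s ≤ i).card = t := by
  obtain ⟨s, hs⟩ := cut_exists I (I.card - t) (by omega)
  refine ⟨s, ?_⟩
  have h := card_filter_add_card_filter_not (s := I) (fun i => i < s)
  simp only [not_lt] at h
  omega

/-- rows that can be lengthened -/
def setI (m J2 : ℕ) (r c : ℕ → ℕ) : Finset ℕ :=
  (range m).filter fun i => r i < J2 ∧ i < c (r i)

/-- rows that can be shortened -/
def setL (m J : ℕ) (r c : ℕ → ℕ) : Finset ℕ :=
  (range m).filter fun i => 0 < r i ∧ r i ≤ J ∧ c (r i - 1) ≤ i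

lemma card_I {m n J2 : ℕ} {r e c : ℕ → ℕ} (D : Dat m n r e c)
    (j : ℕ) (hj2 : j < J2) : c j ≤ e j + (setI m J2 r c).card := by
  have hsub : Ico (e j) (c j) ⊆ setI m J2 r c := by
    intro i hi
    have hi := mem_Ico.1 hi
    have h1 : r i ≤ j := by
      by_contra h
      have := (D.conj i j).1 (by omega)
      omega
    have h2 := D.ac h1
    have h3 := D.cm j
    simp only [setI, mem_filter, mem_range]
    omega
  have := card_le_card hsub
  rw [Nat.card_Ico] at this
  omega

lemma card_L {m n J J2 : ℕ} {r e c : ℕ → ℕ} (D : Dat m n r e c) (Lc : Loc n e c J J2)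
    (j : ℕ) (hj : j < J) : e j ≤ c j + (setL m J r c).card := by
  have hsub : Ico (c j) (e j) ⊆ setL m J r c := by
    intro i hi
    have hi := mem_Ico.1 hi
    have h1 : j < r i := (D.conj i j).2 hi.2
    have h2 := D.ac (show j ≤ r i - 1 by omega)
    have h3 := D.em j
    have h4 : r i ≤ J := by
      by_contra h
      have := (D.conj i J).1 (by omega)
      have := Lc.at_J
      have := D.ac hj.le
      omega
    simp only [setL, mem_filter, mem_range]
    omega
  have := card_le_card hsub
  rw [Nat.card_Ico] at this
  omega

lemma caseB {m n J J2 : ℕ} {r e c : ℕ → ℕ} (D : Dat m n r e c) (Lc : Loc n e c J J2)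
    (hIL : (setL m J r c).card ≤ (setI m J2 r c).card) :
    ∃ r' e' c' τ, 0 < τ ∧ Dat m n r' e' c' ∧ disc n e' c' + 2 * τ = disc n e c ∧
      ∀ F', Sol r' e' c' F' →
        ∃ F, Sol r e c F ∧ ∀ G, (symmDiff F G).card ≤ (symmDiff F' G).card + τ := by
  have hJJ := Lc.lt
  have hJn := Lc.le
  set d : ℕ → ℕ := fun j => if j < J then e j - c j else 0 with hd
  have hdlt : ∀ j, j < J → d j = e j - c j := fun j hj => by simp [hd, hj]
  have hdge : ∀ j, J ≤ j → d j = 0 := fun j hj => by simp [hd, hj]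
  set Q := ∑ j ∈ range J, d j with hQ
  have hQpos : 0 < Q := by
    obtain ⟨j, hj, hlt⟩ := Lc.ex
    have := single_le_sum (f := d) (fun _ _ => Nat.zero_le _) (mem_range.2 hj)
    rw [hdlt j hj] at this
    omega
  have hIpos : 0 < (setI m J2 r c).card := by
    have := card_I (J2 := J2) D J hJJ
    have := Lc.at_J
    omega
  set τ := min (setI m J2 r c).card Q with hτ
  have hτpos : 0 < τ := by omega
  obtain ⟨s, hs⟩ := cut_exists (setI m J2 r c) τ (by omega)
  set I0 := (setI m J2 r c).filter fun i => i < s with hI0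
  have memI0 : ∀ i, i ∈ I0 ↔ (i < m ∧ r i < J2 ∧ i < c (r i)) ∧ i < s := by
    intro i; simp [hI0, setI]
  have hself : ∀ i, e (r i) ≤ i := by
    intro i
    by_contra h
    have := (D.conj i (r i)).2 (by omega)
    omega
  have hIJ : ∀ i ∈ I0, J ≤ r i := by
    intro i hi
    have h1 := (memI0 i).1 hi
    by_contra h
    have := Lc.neg (r i) (by omega)
    have := hself i
    omega
  set r' : ℕ → ℕ := fun i => r i + if i ∈ I0 then 1 else 0 with hr'
  have hr'in : ∀ i ∈ I0, r' i = r i + 1 := fun i hi => by simp [hr', hi]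
  have hr'out : ∀ i, i ∉ I0 → r' i = r i := fun i hi => by simp [hr', hi]
  have ar' : Antitone r' := by
    intro i i' hii
    have h1 := D.conj.anti_left hii
    by_cases hi' : i' ∈ I0
    · rw [hr'in i' hi']
      rcases eq_or_lt_of_le h1 with h2 | h2
      · have h3 := (memI0 i').1 hi'
        have hi : i ∈ I0 := by
          rw [memI0, ← h2]
          omega
        rw [hr'in i hi]; omega
      · have : r i ≤ r' i := by simp [hr']
        omega
    · rw [hr'out i' hi']
      have : r i ≤ r' i := by simp [hr']
      omega
  obtain ⟨e', hC', he'm⟩ := conj_exists m r' ar' (by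
    intro i hi
    rw [hr'out i (by rw [memI0]; omega)]
    exact D.r0 i hi)
  have hr'n : ∀ i, r' i ≤ n := by
    intro i
    by_cases hi : i ∈ I0
    · rw [hr'in i hi]; have := (memI0 i).1 hi; omega
    · rw [hr'out i hi]; exact D.rn i
  have hee : ∀ j, e j ≤ e' j := by
    intro j
    by_contra h
    have h1 := (D.conj (e' j) j).2 (by omega)
    have h2 : r (e' j) ≤ r' (e' j) := by simp [hr']
    have := (hC' (e' j) j).1 (by omega)
    omega
  have heout : ∀ j, e' j ≠ e j → J ≤ j ∧ j < J2 := by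
    intro j hne
    have h0 := hee j
    have h1 := (hC' (e j) j).2 (by omega)
    have h2 : ¬ j < r (e j) := fun h => by have := (D.conj _ _).1 h; omega
    by_cases hi : e j ∈ I0
    · rw [hr'in _ hi] at h1
      have h3 := (memI0 _).1 hi
      have h4 := hIJ _ hi
      omega
    · rw [hr'out _ hi] at h1; omega
  have hec : ∀ j, J ≤ j → j < J2 → e' j ≤ c j := by
    intro j h1 h2
    by_contra h
    have h3 := (hC' (e' j - 1) j).2 (by omega)
    have h4 := Lc.pos j h1 h2
    have h5 : ¬ j < r (e' j - 1) := fun h => by have := (D.conj _ _).1 h; omega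
    by_cases hi : e' j - 1 ∈ I0
    · rw [hr'in _ hi] at h3
      have h6 := (memI0 _).1 hi
      have h7 : r (e' j - 1) = j := by omega
      rw [h7] at h6
      omega
    · rw [hr'out _ hi] at h3; omega
  have hesum : ∑ j ∈ range n, e' j = ∑ j ∈ range n, e j + τ := by
    rw [← conj_sum m n r' e' hC' hr'n he'm, ← conj_sum m n r e D.conj D.rn D.em]
    simp only [hr']
    rw [sum_add_distrib, ← hs]
    congr 1
    rw [← card_filter]
    congr 1
    ext i
    simp only [mem_filter, mem_range]
    constructor
    · exact fun h => h.2
    · exact fun h => ⟨((memI0 i).1 h).1.1, h⟩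
  set κ := fillF d τ with hκdef
  have hκd : ∀ j, κ j ≤ d j := fill_le d τ
  have hκJ : ∑ j ∈ range J, κ j = τ := by
    rw [hκdef, sum_fill]
    omega
  have hκge : ∀ j, J ≤ j → κ j = 0 := fun j hj => by
    have := hκd j; have := hdge j hj; omega
  have hκn : ∑ j ∈ range n, κ j = τ := by
    rw [← hκJ]
    symm
    apply sum_subset (range_subset_range.2 (by omega))
    intro j _ hj
    exact hκge j (by simpa using hj)
  set c' : ℕ → ℕ := fun j => c j + κ j with hc'
  have hc'v : ∀ j, c' j = c j + κ j := fun j => rfl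
  have hc'lt : ∀ j, j < J → c' j ≤ e j := by
    intro j hj
    have := hκd j; have := hdlt j hj; have := Lc.neg j hj; have := hc'v j
    omega
  have hc'ge : ∀ j, J ≤ j → c' j = c j := by
    intro j hj
    have := hκge j hj; have := hc'v j
    omega
  have heq : ∀ j, j < J → e' j = e j := by
    intro j hj
    by_contra h
    have := heout j h; omega
  have hD' : Dat m n r' e' c' := by
    refine ⟨hC', ?_, hr'n, he'm, ?_, ?_, ?_, ?_⟩
    · intro i j hij
      rcases eq_or_lt_of_le hij with rfl | hlt
      · exact le_rfl
      · have h1 := D.ac hij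
        have h2 := hc'v i
        by_cases hj0 : κ j = 0
        · have := hc'v j; omega
        · have hjJ : j < J := by
            by_contra h
            exact hj0 (hκge j (by omega))
          have h3 : κ i = d i := fill_full d τ i j hlt hj0
          have h4 := hdlt i (by omega)
          have h5 := hc'lt j hjJ
          have h6 := D.conj.anti_right hij
          have h7 := Lc.neg i (by omega)
          omega
    · intro j
      by_cases hj : j < J
      · have := hc'lt j hj; have := D.em j; omega
      · have := hc'ge j (by omega); have := D.cm j; omega
    · intro j hj
      have := hc'ge j (by omega); have := D.c0 j hj; omega
    · apply dom_step J J2 n e c e' c' hJn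
      · intro j hj; rw [heq j hj]; exact hc'lt j hj
      · intro j h1 h2; rw [hc'ge j h1]; exact hec j h1 h2
      · intro j hj
        refine ⟨?_, hc'ge j (by omega)⟩
        by_contra h
        have := heout j h; omega
      · rw [hesum, show ∑ j ∈ range n, c' j = ∑ j ∈ range n, c j + τ by
          simp only [hc']; rw [sum_add_distrib, hκn]]
        omega
      · exact D.dom
    · rw [hesum, ← D.tot, ← hκn, ← sum_add_distrib]
  refine ⟨r', e', c', τ, hτpos, hD', ?_, ?_⟩
  · have h1 : ∀ j ∈ range n, (e j - c j) + (c j - e j) =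
        ((e' j - c' j) + (c' j - e' j)) + ((e' j - e j) + κ j) := by
      intro j _
      by_cases hj : j < J
      · have := heq j hj; have := hc'lt j hj; have := Lc.neg j hj; have := hc'v j
        omega
      · have := hc'ge j (by omega)
        have := hc'v j
        by_cases hj2 : j < J2
        · have := hec j (by omega) hj2; have := hee j; omega
        · have : e' j = e j := by
            by_contra h
            have := heout j h; omega
          omega
    have h2 : ∑ j ∈ range n, (e' j - e j) = τ := by
      have : ∑ j ∈ range n, e' j = ∑ j ∈ range n, e j + ∑ j ∈ range n, (e' j - e j) := by
        rw [← sum_add_distrib]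
        exact sum_congr rfl fun j _ => by have := hee j; omega
      omega
    unfold disc
    rw [sum_congr rfl h1]
    simp only [sum_add_distrib]
    rw [h2, hκn]
    omega
  · intro F' hF'
    obtain ⟨k, hk⟩ := fill_unique d τ
    have := stepB r e c r' e' c' κ F' I0 (range J) k hF' hC' (fun i => rfl) hc'v
      (fun j hj => hκge j (by simpa using hj)) (by rw [hκJ, hs])
      (fun j hj => ⟨heq j (mem_range.1 hj), hc'lt j (mem_range.1 hj)⟩)
      (by
        intro j hj h0
        have hj := mem_range.1 hj
        have h1 := hdlt j hj
        have h2 := hc'v j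
        have h3 := Lc.neg j hj
        by_cases h4 : κ j = d j
        · left; omega
        · right
          rcases hk j h0 with h5 | h5
          · exact absurd h5 h4
          · refine ⟨h5, ?_⟩
            have h6 := fill_partial d τ j J hj h4
            have h7 := card_L D Lc j hj
            omega)
      (by
        intro i hi
        have h1 := (memI0 i).1 hi
        have h2 := hIJ i hi
        have h3 := hself i
        refine ⟨fun j hj => ?_, by omega⟩
        have := mem_range.1 hj
        omega)
      hee
      (by
        intro j hj
        obtain ⟨h1, h2⟩ := heout j hj
        rw [hc'ge j h1]
        exact hec j h1 h2)
    rw [hs] at this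
    exact this

lemma caseA {m n J J2 : ℕ} {r e c : ℕ → ℕ} (D : Dat m n r e c) (Lc : Loc n e c J J2)
    (hIL : (setI m J2 r c).card ≤ (setL m J r c).card) :
    ∃ r' e' c' τ, 0 < τ ∧ Dat m n r' e' c' ∧ disc n e' c' + 2 * τ = disc n e c ∧
      ∀ F', Sol r' e' c' F' →
        ∃ F, Sol r e c F ∧ ∀ G, (symmDiff F G).card ≤ (symmDiff F' G).card + τ := by
  have hJJ := Lc.lt
  have hJn := Lc.le
  set d : ℕ → ℕ := fun j => if J ≤ j ∧ j < J2 then c j - e j else 0 with hd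
  have hdin : ∀ j, J ≤ j → j < J2 → d j = c j - e j := fun j h1 h2 => by simp [hd, h1, h2]
  have hdout : ∀ j, ¬ (J ≤ j ∧ j < J2) → d j = 0 := fun j hj => by
    simp only [hd, if_neg hj]
  have hdc : ∀ j, d j ≤ c j := by
    intro j
    by_cases h : J ≤ j ∧ j < J2
    · rw [hdin j h.1 h.2]; omega
    · rw [hdout j h]; omega
  set P := ∑ j ∈ range n, d j with hP
  have hPpos : 0 < P := by
    have := single_le_sum (f := d) (fun _ _ => Nat.zero_le _) (mem_range.2 (hJJ.trans_le hJn))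
    rw [hdin J le_rfl hJJ] at this
    have := Lc.at_J
    omega
  have hLpos : 0 < (setL m J r c).card := by
    obtain ⟨j, hj, hlt⟩ := Lc.ex
    have := card_L D Lc j hj
    omega
  set τ := min (setL m J r c).card P with hτ
  have hτpos : 0 < τ := by omega
  obtain ⟨s, hs⟩ := cut_exists_top (setL m J r c) τ (by omega)
  set I0 := (setL m J r c).filter fun i => s ≤ i with hI0
  have memI0 : ∀ i, i ∈ I0 ↔ (i < m ∧ 0 < r i ∧ r i ≤ J ∧ c (r i - 1) ≤ i) ∧ s ≤ i := by
    intro i; simp [hI0, setL]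
  set r' : ℕ → ℕ := fun i => r i - if i ∈ I0 then 1 else 0 with hr'
  have hr'in : ∀ i ∈ I0, r' i = r i - 1 := fun i hi => by simp [hr', hi]
  have hr'out : ∀ i, i ∉ I0 → r' i = r i := fun i hi => by simp [hr', hi]
  have hr'le : ∀ i, r' i ≤ r i := fun i => by simp [hr']
  have hr'add : ∀ i, r i = r' i + if i ∈ I0 then 1 else 0 := by
    intro i
    by_cases hi : i ∈ I0
    · have := (memI0 i).1 hi
      rw [hr'in i hi, if_pos hi]; omega
    · rw [hr'out i hi, if_neg hi]; omega
  have ar' : Antitone r' := by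
    intro i i' hii
    have h1 := D.conj.anti_left hii
    have h0 := hr'le i'
    by_cases hi : i ∈ I0
    · rw [hr'in i hi]
      rcases eq_or_lt_of_le h1 with h2 | h2
      · have h3 := (memI0 i).1 hi
        have hi' : i' ∈ I0 := by
          rw [memI0, h2]
          have : i' < m := by
            by_contra h
            have := D.r0 i' (by omega)
            omega
          omega
        rw [hr'in i' hi']; omega
      · omega
    · rw [hr'out i hi]
      omega
  obtain ⟨e', hC', he'm⟩ := conj_exists m r' ar' (by
    intro i hi
    have := hr'le i
    have := D.r0 i hi
    omega)
  have hr'n : ∀ i, r' i ≤ n := fun i => (hr'le i).trans (D.rn i)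
  have hee : ∀ j, e' j ≤ e j := by
    intro j
    by_contra h
    have h1 := (hC' (e j) j).2 (by omega)
    have h2 := hr'le (e j)
    have := (D.conj (e j) j).1 (by omega)
    omega
  have hchange : ∀ j, e' j ≠ e j → j < J ∧ c j ≤ e' j := by
    intro j hne
    have h0 := hee j
    have h1 := (D.conj (e' j) j).2 (by omega)
    have h2 : ¬ j < r' (e' j) := fun h => by have := (hC' _ _).1 h; omega
    by_cases hi : e' j ∈ I0
    · rw [hr'in _ hi] at h2
      have h3 := (memI0 _).1 hi
      have h4 : r (e' j) - 1 = j := by omega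
      rw [h4] at h3
      omega
    · rw [hr'out _ hi] at h2; omega
  have hec : ∀ j, j < J → c j ≤ e' j := by
    intro j hj
    by_cases h : e' j = e j
    · rw [h]; exact Lc.neg j hj
    · exact (hchange j h).2
  have heq : ∀ j, J ≤ j → e' j = e j := by
    intro j hj
    by_contra h
    have := hchange j h; omega
  have hesum : ∑ j ∈ range n, e' j + τ = ∑ j ∈ range n, e j := by
    rw [← conj_sum m n r' e' hC' hr'n he'm, ← conj_sum m n r e D.conj D.rn D.em]
    rw [sum_congr rfl (fun i _ => hr'add i), sum_add_distrib, ← hs]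
    congr 1
    rw [← card_filter]
    congr 1
    ext i
    simp only [mem_filter, mem_range]
    constructor
    · exact fun h => ⟨((memI0 i).1 h).1.1, h⟩
    · exact fun h => h.2
  set φ := fillF d (P - τ) with hφdef
  have hφd : ∀ j, φ j ≤ d j := fill_le d _
  set κ : ℕ → ℕ := fun j => d j - φ j with hκdef
  have hκv : ∀ j, κ j + φ j = d j := fun j => by
    have := hφd j
    simp only [hκdef]; omega
  have hκout : ∀ j, ¬ (J ≤ j ∧ j < J2) → κ j = 0 := fun j hj => by
    have := hκv j; have := hdout j hj; omega
  have hκn : ∑ j ∈ range n, κ j = τ := by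
    have h1 : ∑ j ∈ range n, κ j + ∑ j ∈ range n, φ j = P := by
      rw [← sum_add_distrib, hP]
      exact sum_congr rfl fun j _ => hκv j
    rw [hφdef, sum_fill, ← hP] at h1
    omega
  have hκs : ∑ j ∈ Ico J J2, κ j = τ := by
    rw [← hκn]
    apply sum_subset
    · intro j hj
      have := mem_Ico.1 hj
      exact mem_range.2 (by omega)
    · intro j _ hj
      exact hκout j (by simpa using hj)
  set c' : ℕ → ℕ := fun j => c j - κ j with hc'
  have hc'v : ∀ j, c j = c' j + κ j := fun j => by
    have := hdc j; have := hκv j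
    simp only [hc']; omega
  have hc'in : ∀ j, J ≤ j → j < J2 → c' j = e j + φ j := by
    intro j h1 h2
    have := hκv j; have := hdin j h1 h2; have := Lc.pos j h1 h2; have := hc'v j
    omega
  have hc'out : ∀ j, ¬ (J ≤ j ∧ j < J2) → c' j = c j := by
    intro j hj
    have := hκout j hj; have := hc'v j
    omega
  have hc'sum : ∑ j ∈ range n, c j = ∑ j ∈ range n, c' j + τ := by
    rw [← hκn, ← sum_add_distrib]
    exact sum_congr rfl fun j _ => hc'v j
  have hD' : Dat m n r' e' c' := by
    refine ⟨hC', ?_, hr'n, he'm, ?_, ?_, ?_, ?_⟩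
    · intro i j hij
      rcases eq_or_lt_of_le hij with rfl | hlt
      · exact le_rfl
      · have h1 := D.ac hij
        have h2 := D.conj.anti_right hij
        have h3 := hc'v i
        have h4 := hc'v j
        by_cases hi : J ≤ i ∧ i < J2
        · have h5 := hc'in i hi.1 hi.2
          by_cases hj : J ≤ j ∧ j < J2
          · have h6 := hc'in j hj.1 hj.2
            by_cases h7 : φ j = 0
            · omega
            · have h8 : φ i = d i := fill_full d _ i j hlt h7
              have := hκv i
              omega
          · have h6 := D.ac (show J2 ≤ j by omega)
            have h7 := D.conj.anti_right hi.2.le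
            have := Lc.at_J2
            omega
        · have := hc'out i hi
          omega
    · intro j
      have := hc'v j; have := D.cm j; omega
    · intro j hj
      have := hc'v j; have := D.c0 j hj; omega
    · apply dom_step J J2 n e c e' c' hJn
      · intro j hj; rw [hc'out j (by omega)]; exact hec j hj
      · intro j h1 h2; rw [hc'in j h1 h2, heq j h1]; omega
      · intro j hj
        exact ⟨heq j (by omega), hc'out j (by omega)⟩
      · omega
      · exact D.dom
    · have := D.tot
      omega
  refine ⟨r', e', c', τ, hτpos, hD', ?_, ?_⟩
  · have h1 : ∀ j ∈ range n, (e j - c j) + (c j - e j) =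
        ((e' j - c' j) + (c' j - e' j)) + ((e j - e' j) + κ j) := by
      intro j _
      have := hc'v j
      by_cases hj : j < J
      · have := hc'out j (by omega); have := hec j hj; have := hee j
        omega
      · have := heq j (by omega)
        by_cases hj2 : j < J2
        · have := hc'in j (by omega) hj2; omega
        · have := hc'out j (by omega)
          omega
    have h2 : ∑ j ∈ range n, (e j - e' j) = τ := by
      have : ∑ j ∈ range n, e j = ∑ j ∈ range n, e' j + ∑ j ∈ range n, (e j - e' j) := by
        rw [← sum_add_distrib]
        exact sum_congr rfl fun j _ => by have := hee j; omega
      omega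
    unfold disc
    rw [sum_congr rfl h1]
    simp only [sum_add_distrib]
    rw [h2, hκn]
    omega
  · intro F' hF'
    obtain ⟨k, hk⟩ := fill_unique d (P - τ)
    have := stepA r e c r' e' c' κ F' I0 (Ico J J2) k hF' hC' hr'add hc'v
      (fun j hj => hκout j (by simpa using hj)) (by rw [hκs, hs])
      (by
        intro j hj
        have hj := mem_Ico.1 hj
        refine ⟨heq j hj.1, ?_⟩
        rw [hc'in j hj.1 hj.2]; omega)
      (by
        intro j hj h0
        have hj := mem_Ico.1 hj
        have h1 := hc'in j hj.1 hj.2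
        have h2 := hκv j
        by_cases h4 : φ j = 0
        · left; omega
        · right
          rcases hk j h4 with h5 | h5
          · have h5 : φ j = d j := h5
            omega
          · refine ⟨h5, ?_⟩
            have h6 : φ j ≤ P - τ := by
              rw [hφdef]; unfold fillF; omega
            have h7 := card_I D j hj.2
            omega)
      (by
        intro i hi
        have h1 := (memI0 i).1 hi
        rw [hr'in i hi]
        have h3 := (D.conj i (r i - 1)).1 (by omega)
        refine ⟨fun j hj => ?_, by omega⟩
        have := mem_Ico.1 hj
        omega)
      hee
      (by
        intro j hj
        obtain ⟨h1, h2⟩ := hchange j hj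
        rw [hc'out j (by omega)]
        exact h2)
    rw [hs] at this
    exact this

/-- the Young diagram of `g` -/
def yng (m n : ℕ) (g : ℕ → ℕ) : Finset (ℕ × ℕ) :=
  (range m ×ˢ range n).filter fun p => p.2 < g p.1

lemma mem_yng {m n : ℕ} {g h : ℕ → ℕ} (hC : ConjP g h) (hg : ∀ i, g i ≤ n) (hh : ∀ j, h j ≤ m)
    (i j : ℕ) : (i, j) ∈ yng m n g ↔ j < g i := by
  simp only [yng, mem_filter, mem_product, mem_range]
  constructor
  · exact fun h => h.2
  · intro hj
    have h1 := (hC i j).1 hj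
    have := hg i
    have := hh j
    omega

lemma core (m n : ℕ) : ∀ (N : ℕ) (r e c : ℕ → ℕ), Dat m n r e c → disc n e c = N →
    ∃ F g h, Sol r e c F ∧ ConjP g h ∧ (∀ i, g i ≤ n) ∧ (∀ j, h j ≤ m) ∧
      2 * (symmDiff F (yng m n g)).card ≤ N := by
  intro N
  induction N using Nat.strong_induction_on with
  | _ N ih =>
    intro r e c D hN
    by_cases heq : ∀ j, e j = c j
    · refine ⟨yng m n r, r, e, ⟨?_, ?_, ?_, ?_⟩, D.conj, D.rn, D.em, ?_⟩
      · intro i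
        have : (yng m n r).filter (fun p => p.1 = i) = (range (r i)).image fun j => (i, j) := by
          ext ⟨a, b⟩
          simp only [mem_filter, mem_yng D.conj D.rn D.em, mem_image, mem_range, Prod.mk.injEq]
          constructor
          · rintro ⟨h1, rfl⟩; exact ⟨b, h1, rfl, rfl⟩
          · rintro ⟨x, h1, rfl, rfl⟩; exact ⟨h1, rfl⟩
        rw [this, card_image_of_injective _ (fun a b hab => (Prod.mk.inj hab).2), card_range]
      · intro j
        have : (yng m n r).filter (fun p => p.2 = j) = (range (e j)).image fun i => (i, j) := by
          ext ⟨a, b⟩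
          simp only [mem_filter, mem_yng D.conj D.rn D.em, mem_image, mem_range, Prod.mk.injEq]
          rw [D.conj a b]
          constructor
          · rintro ⟨h1, rfl⟩; exact ⟨a, h1, rfl, rfl⟩
          · rintro ⟨x, h1, rfl, rfl⟩; exact ⟨h1, rfl⟩
        rw [this, card_image_of_injective _ (fun a b hab => (Prod.mk.inj hab).1), card_range, heq j]
      · intro i j h1 h2
        rw [mem_yng D.conj D.rn D.em] at h1
        omega
      · intro i j h1 h2
        rw [mem_yng D.conj D.rn D.em] at h1
        omega
      · simp
    · obtain ⟨J, J2, Lc⟩ := loc_exists D heq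
      obtain ⟨r', e', c', τ, hτ, D', hdisc, hstep⟩ : ∃ r' e' c' τ, 0 < τ ∧ Dat m n r' e' c' ∧
          disc n e' c' + 2 * τ = disc n e c ∧ ∀ F', Sol r' e' c' F' →
          ∃ F, Sol r e c F ∧ ∀ G, (symmDiff F G).card ≤ (symmDiff F' G).card + τ := by
        rcases le_total (setL m J r c).card (setI m J2 r c).card with h | h
        · exact caseB D Lc h
        · exact caseA D Lc h
      obtain ⟨F', g, h, hS, hC, hg, hh, hle⟩ := ih (disc n e' c') (by omega) r' e' c' D' rfl
      obtain ⟨F, hF, hG⟩ := hstep F' hS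
      refine ⟨F, g, h, hF, hC, hg, hh, ?_⟩
      have := hG (yng m n g)
      omega

lemma disc_conj (m n : ℕ) (r e b c : ℕ → ℕ) (h1 : ConjP r e) (h2 : ConjP b c)
    (hr : ∀ i, r i ≤ n) (hb : ∀ i, b i ≤ n) (he : ∀ j, e j ≤ m) (hc : ∀ j, c j ≤ m) :
    disc m r b = disc n e c := by
  have s1 := conj_sum m n r e h1 hr he
  have s2 := conj_sum m n b c h2 hb hc
  have s3 := conj_sum m n (fun i => min (r i) (b i)) (fun j => min (e j) (c j))
    (by
      intro i j
      have := h1 i j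
      have := h2 i j
      simp only [lt_min_iff]
      tauto)
    (fun i => (min_le_left _ _).trans (hr i)) (fun i => (min_le_left _ _).trans (he i))
  have key : ∀ (k : ℕ) (x y : ℕ → ℕ), disc k x y + 2 * ∑ i ∈ range k, min (x i) (y i) =
      ∑ i ∈ range k, x i + ∑ i ∈ range k, y i := by
    intro k x y
    unfold disc
    rw [mul_sum, ← sum_add_distrib, ← sum_add_distrib]
    exact sum_congr rfl fun i _ => by omega
  have k1 := key m r b
  have k2 := key n e c
  omega

lemma dominance (m : ℕ) (r e c : ℕ → ℕ) (F : Finset (ℕ × ℕ)) (hC : ConjP r e)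
    (he : ∀ j, e j ≤ m)
    (hrow : ∀ i, (F.filter fun p => p.1 = i).card = r i)
    (hcol : ∀ j, (F.filter fun p => p.2 = j).card = c j) (t : ℕ) :
    ∑ j ∈ range t, c j ≤ ∑ j ∈ range t, e j := by
  have h1 : (F.filter fun p => p.2 < t).card = ∑ j ∈ range t, c j := by
    rw [card_eq_sum_card_fiberwise (f := fun p : ℕ × ℕ => p.2) (t := range t)]
    · apply sum_congr rfl
      intro j hj
      rw [← hcol j, filter_filter]
      congr 1
      apply filter_congr
      intro p _
      have := mem_range.1 hj
      omega
    · intro p hp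
      simpa using (mem_filter.1 hp).2
  have h2 : (F.filter fun p => p.2 < t).card ≤ ∑ i ∈ range m, min (r i) t := by
    rw [card_eq_sum_card_fiberwise (f := fun p : ℕ × ℕ => p.1) (t := range m)]
    · apply sum_le_sum
      intro i _
      apply le_min
      · rw [← hrow i]
        apply card_le_card
        intro p hp
        simp only [mem_filter] at hp ⊢
        exact ⟨hp.1.1, hp.2⟩
      · have : ((F.filter fun p => p.2 < t).filter fun p => p.1 = i) ⊆
            (range t).image fun j => (i, j) := by
          rintro ⟨a, b⟩ hp
          simp only [mem_filter] at hp
          obtain ⟨⟨_, hb⟩, rfl⟩ := hp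
          exact mem_image.2 ⟨b, mem_range.2 hb, rfl⟩
        have h3 := card_le_card this
        have h4 := card_image_le (s := range t) (f := fun j => (i, j))
        rw [card_range] at h4
        omega
    · rintro ⟨a, b⟩ hp
      have hp := (mem_filter.1 hp).1
      have : r a ≠ 0 := by
        rw [← hrow a]
        exact card_ne_zero_of_mem (mem_filter.2 ⟨hp, rfl⟩)
      have h3 := (hC a 0).1 (by omega)
      have := he 0
      simp only [coe_range, Set.mem_Iio]
      omega
  have h3 := conj_sum m t (fun i => min (r i) t) (fun j => if j < t then e j else 0)
    (by
      intro i j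
      have := hC i j
      simp only [lt_min_iff]
      by_cases hj : j < t
      · simp [hj, this]
      · simp [hj])
    (fun i => min_le_right _ _)
    (by
      intro j
      have := he j
      split_ifs <;> omega)
  have h4 : ∑ j ∈ range t, (if j < t then e j else 0) = ∑ j ∈ range t, e j :=
    sum_congr rfl fun j hj => by rw [if_pos (mem_range.1 hj)]
  omega

/-- horizontal boundary set -/
def bdH (F : Finset (ℤ × ℤ)) : Finset (ℤ × ℤ) :=
  (F ∪ F.image fun p => (p.1 - 1, p.2)).filter
    fun p => decide (p ∈ F) ≠ decide ((p.1 + 1, p.2) ∈ F)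

/-- vertical boundary set -/
def bdV (F : Finset (ℤ × ℤ)) : Finset (ℤ × ℤ) :=
  (F ∪ F.image fun p => (p.1, p.2 - 1)).filter
    fun p => decide (p ∈ F) ≠ decide ((p.1, p.2 + 1) ∈ F)

lemma mem_bdH (F : Finset (ℤ × ℤ)) (a b : ℤ) :
    (a, b) ∈ bdH F ↔ ¬ ((a, b) ∈ F ↔ (a + 1, b) ∈ F) := by
  simp only [bdH, mem_filter, mem_union, mem_image, ne_eq, decide_eq_decide]
  constructor
  · exact fun h => h.2
  · intro h
    refine ⟨?_, h⟩
    by_cases h1 : (a, b) ∈ F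
    · exact Or.inl h1
    · right
      refine ⟨(a + 1, b), by tauto, by simp⟩

lemma mem_bdV (F : Finset (ℤ × ℤ)) (a b : ℤ) :
    (a, b) ∈ bdV F ↔ ¬ ((a, b) ∈ F ↔ (a, b + 1) ∈ F) := by
  simp only [bdV, mem_filter, mem_union, mem_image, ne_eq, decide_eq_decide]
  constructor
  · exact fun h => h.2
  · intro h
    refine ⟨?_, h⟩
    by_cases h1 : (a, b) ∈ F
    · exact Or.inl h1
    · right
      refine ⟨(a, b + 1), by tauto, by simp⟩

lemma Lh_symm (A B : Finset (ℤ × ℤ)) : Lh A ≤ Lh B + 2 * (symmDiff A B).card := by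
  have hsub : bdH A ⊆ bdH B ∪ (symmDiff A B ∪ (symmDiff A B).image fun p => (p.1 - 1, p.2)) := by
    rintro ⟨a, b⟩ hp
    rw [mem_bdH] at hp
    by_cases h1 : (a, b) ∈ symmDiff A B
    · exact mem_union_right _ (mem_union_left _ h1)
    · by_cases h2 : (a + 1, b) ∈ symmDiff A B
      · exact mem_union_right _ (mem_union_right _ (mem_image.2 ⟨_, h2, by simp⟩))
      · apply mem_union_left
        rw [mem_bdH]
        rw [mem_symmDiff] at h1 h2
        tauto
  have h1 := card_le_card hsub
  have h2 := card_union_le (bdH B) (symmDiff A B ∪ (symmDiff A B).image fun p => (p.1 - 1, p.2))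
  have h3 := card_union_le (symmDiff A B) ((symmDiff A B).image fun p => (p.1 - 1, p.2))
  have h4 := card_image_le (s := symmDiff A B) (f := fun p => (p.1 - 1, p.2))
  change (bdH A).card ≤ (bdH B).card + _
  omega

lemma Lv_symm (A B : Finset (ℤ × ℤ)) : Lv A ≤ Lv B + 2 * (symmDiff A B).card := by
  have hsub : bdV A ⊆ bdV B ∪ (symmDiff A B ∪ (symmDiff A B).image fun p => (p.1, p.2 - 1)) := by
    rintro ⟨a, b⟩ hp
    rw [mem_bdV] at hp
    by_cases h1 : (a, b) ∈ symmDiff A B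
    · exact mem_union_right _ (mem_union_left _ h1)
    · by_cases h2 : (a, b + 1) ∈ symmDiff A B
      · exact mem_union_right _ (mem_union_right _ (mem_image.2 ⟨_, h2, by simp⟩))
      · apply mem_union_left
        rw [mem_bdV]
        rw [mem_symmDiff] at h1 h2
        tauto
  have h1 := card_le_card hsub
  have h2 := card_union_le (bdV B) (symmDiff A B ∪ (symmDiff A B).image fun p => (p.1, p.2 - 1))
  have h3 := card_union_le (symmDiff A B) ((symmDiff A B).image fun p => (p.1, p.2 - 1))
  have h4 := card_image_le (s := symmDiff A B) (f := fun p => (p.1, p.2 - 1))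
  change (bdV A).card ≤ (bdV B).card + _
  omega

/-- shift from zero-based natural indices to one-based integer indices -/
def shf (p : ℕ × ℕ) : ℤ × ℤ := ((p.1 : ℤ) + 1, (p.2 : ℤ) + 1)

lemma shf_inj : Function.Injective shf := by
  rintro ⟨a, b⟩ ⟨a', b'⟩ h
  simp only [shf, Prod.mk.injEq] at h
  ext <;> simp only <;> omega

lemma mem_shf (F : Finset (ℕ × ℕ)) (a b : ℤ) :
    (a, b) ∈ F.image shf ↔ ∃ i j : ℕ, (i, j) ∈ F ∧ a = i + 1 ∧ b = j + 1 := by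
  simp only [mem_image, Prod.exists, shf, Prod.mk.injEq]
  constructor
  · rintro ⟨i, j, h, h1, h2⟩; exact ⟨i, j, h, h1.symm, h2.symm⟩
  · rintro ⟨i, j, h, h1, h2⟩; exact ⟨i, j, h, h1.symm, h2.symm⟩

lemma Lh_yng {m n : ℕ} {g h : ℕ → ℕ} (hC : ConjP g h) (hg : ∀ i, g i ≤ n) (hh : ∀ j, h j ≤ m) :
    Lh ((yng m n g).image shf) ≤ 2 * n := by
  have hsub : bdH ((yng m n g).image shf) ⊆
      ((range n).image fun j : ℕ => ((0 : ℤ), (j : ℤ) + 1)) ∪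
      ((range n).image fun j : ℕ => ((h j : ℤ), (j : ℤ) + 1)) := by
    rintro ⟨a, b⟩ hp
    rw [mem_bdH, mem_shf, mem_shf] at hp
    simp only [mem_yng hC hg hh] at hp
    simp only [mem_union, mem_image, mem_range, Prod.mk.injEq]
    by_cases h1 : ∃ i j : ℕ, j < g i ∧ a = i + 1 ∧ b = j + 1
    · obtain ⟨i, j, h2, h3, h4⟩ := h1
      right
      have h5 := (hC i j).1 h2
      refine ⟨j, by have := hg i; omega, ?_, h4.symm⟩
      by_contra h6
      apply hp
      refine ⟨fun _ => ⟨i + 1, j, (hC _ _).2 (by omega), by omega, h4⟩,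
        fun _ => ⟨i, j, h2, h3, h4⟩⟩
    · obtain ⟨i, j, h2, h3, h4⟩ : ∃ i j : ℕ, j < g i ∧ a + 1 = i + 1 ∧ b = j + 1 := by tauto
      left
      refine ⟨j, by have := hg i; omega, ?_, h4.symm⟩
      have h5 := (hC i j).1 h2
      by_contra h6
      apply h1
      exact ⟨i - 1, j, (hC _ _).2 (by omega), by omega, h4⟩
  have h1 := card_le_card hsub
  have h2 := card_union_le ((range n).image fun j : ℕ => ((0 : ℤ), (j : ℤ) + 1))
      ((range n).image fun j : ℕ => ((h j : ℤ), (j : ℤ) + 1))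
  have h3 := card_image_le (s := range n) (f := fun j : ℕ => ((0 : ℤ), (j : ℤ) + 1))
  have h4 := card_image_le (s := range n) (f := fun j : ℕ => ((h j : ℤ), (j : ℤ) + 1))
  rw [card_range] at h3 h4
  change (bdH _).card ≤ _
  omega

lemma Lv_yng {m n : ℕ} {g h : ℕ → ℕ} (hC : ConjP g h) (hg : ∀ i, g i ≤ n) (hh : ∀ j, h j ≤ m) :
    Lv ((yng m n g).image shf) ≤ 2 * m := by
  have hsub : bdV ((yng m n g).image shf) ⊆
      ((range m).image fun i : ℕ => ((i : ℤ) + 1, (0 : ℤ))) ∪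
      ((range m).image fun i : ℕ => ((i : ℤ) + 1, (g i : ℤ))) := by
    rintro ⟨a, b⟩ hp
    rw [mem_bdV, mem_shf, mem_shf] at hp
    simp only [mem_yng hC hg hh] at hp
    simp only [mem_union, mem_image, mem_range, Prod.mk.injEq]
    by_cases h1 : ∃ i j : ℕ, j < g i ∧ a = i + 1 ∧ b = j + 1
    · obtain ⟨i, j, h2, h3, h4⟩ := h1
      right
      have h5 := (hC i j).1 h2
      refine ⟨i, by have := hh j; omega, h3.symm, ?_⟩
      by_contra h6
      apply hp
      refine ⟨fun _ => ⟨i, j + 1, by omega, h3, by omega⟩,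
        fun _ => ⟨i, j, h2, h3, h4⟩⟩
    · obtain ⟨i, j, h2, h3, h4⟩ : ∃ i j : ℕ, j < g i ∧ a = i + 1 ∧ b + 1 = j + 1 := by tauto
      left
      have h5 := (hC i j).1 h2
      refine ⟨i, by have := hh j; omega, h3.symm, ?_⟩
      by_contra h6
      apply h1
      exact ⟨i, j - 1, by omega, h3, by omega⟩
  have h1 := card_le_card hsub
  have h2 := card_union_le ((range m).image fun i : ℕ => ((i : ℤ) + 1, (0 : ℤ)))
      ((range m).image fun i : ℕ => ((i : ℤ) + 1, (g i : ℤ)))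
  have h3 := card_image_le (s := range m) (f := fun i : ℕ => ((i : ℤ) + 1, (0 : ℤ)))
  have h4 := card_image_le (s := range m) (f := fun i : ℕ => ((i : ℤ) + 1, (g i : ℤ)))
  rw [card_range] at h3 h4
  change (bdV _).card ≤ _
  omega

lemma rowSum_shf (F : Finset (ℕ × ℕ)) (i : ℕ) :
    rowSum (F.image shf) ((i : ℤ) + 1) = (F.filter fun p => p.1 = i).card := by
  unfold rowSum
  rw [filter_image, card_image_of_injective _ shf_inj]
  congr 1
  apply filter_congr
  intro p _
  simp [shf]

lemma colSum_shf (F : Finset (ℕ × ℕ)) (j : ℕ) :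
    colSum (F.image shf) ((j : ℤ) + 1) = (F.filter fun p => p.2 = j).card := by
  unfold colSum
  rw [filter_image, card_image_of_injective _ shf_inj]
  congr 1
  apply filter_congr
  intro p _
  simp [shf]

lemma card_symm_shf (A B : Finset (ℕ × ℕ)) :
    (symmDiff (A.image shf) (B.image shf)).card = (symmDiff A B).card := by
  rw [← image_symmDiff _ _ shf_inj, card_image_of_injective _ shf_inj]

/-- For consistent monotone line sums with `n = r 1` and `m = c 1`, there exists a set
`F₂` with these line sums whose horizontal boundary has length at most `2n + 2α` and
whose vertical boundary has length at most `2m + 2α`, where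
`2α = ∑ |rᵢ - bᵢ|` with `bᵢ = #{j : c_j ≥ i}`. -/
theorem exists_small_boundary (m n : ℕ) (r c : ℕ → ℕ) (hm : 1 ≤ m) (hn : 1 ≤ n)
    (hr : ∀ i i' : ℕ, 1 ≤ i → i ≤ i' → i' ≤ m → r i' ≤ r i)
    (hc : ∀ j j' : ℕ, 1 ≤ j → j ≤ j' → j' ≤ n → c j' ≤ c j)
    (hr1 : r 1 = n) (hc1 : c 1 = m)
    (hcons : ∃ F : Finset (ℤ × ℤ),
      F ⊆ Finset.Icc 1 (m : ℤ) ×ˢ Finset.Icc 1 (n : ℤ) ∧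
      (∀ i ∈ Finset.Icc 1 m, rowSum F i = r i) ∧
      (∀ j ∈ Finset.Icc 1 n, colSum F j = c j))
    (b : ℕ → ℕ)
    (hb : ∀ i : ℕ, b i = ((Finset.Icc 1 n).filter fun j => i ≤ c j).card) :
    ∃ F2 : Finset (ℤ × ℤ),
      F2 ⊆ Finset.Icc 1 (m : ℤ) ×ˢ Finset.Icc 1 (n : ℤ) ∧
      (∀ i ∈ Finset.Icc 1 m, rowSum F2 i = r i) ∧
      (∀ j ∈ Finset.Icc 1 n, colSum F2 j = c j) ∧
      Lh F2 ≤ 2 * n + ∑ i ∈ Finset.Icc 1 m, ((r i : ℤ) - b i).natAbs ∧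
      Lv F2 ≤ 2 * m + ∑ i ∈ Finset.Icc 1 m, ((r i : ℤ) - b i).natAbs := by
  classical
  obtain ⟨F, hFsub, hFrow, hFcol⟩ := hcons
  set R : ℕ → ℕ := fun i => if i < m then r (i + 1) else 0 with hR
  set C : ℕ → ℕ := fun j => if j < n then c (j + 1) else 0 with hCdef
  have hRlt : ∀ i, i < m → R i = r (i + 1) := fun i hi => by simp only [hR, if_pos hi]
  have hRge : ∀ i, m ≤ i → R i = 0 := fun i hi => by simp only [hR, if_neg (not_lt.2 hi)]
  have hClt : ∀ j, j < n → C j = c (j + 1) := fun j hj => by simp only [hCdef, if_pos hj]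
  have hCge : ∀ j, n ≤ j → C j = 0 := fun j hj => by simp only [hCdef, if_neg (not_lt.2 hj)]
  have aR : Antitone R := by
    intro i i' hii
    by_cases h : i' < m
    · rw [hRlt i' h, hRlt i (by omega)]
      exact hr _ _ (by omega) (by omega) (by omega)
    · rw [hRge i' (by omega)]; omega
  have aC : Antitone C := by
    intro i i' hii
    by_cases h : i' < n
    · rw [hClt i' h, hClt i (by omega)]
      exact hc _ _ (by omega) (by omega) (by omega)
    · rw [hCge i' (by omega)]; omega
  have hRn : ∀ i, R i ≤ n := by
    intro i
    have h1 := aR (Nat.zero_le i)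
    rw [hRlt 0 (by omega), zero_add, hr1] at h1
    exact h1
  have hCm : ∀ j, C j ≤ m := by
    intro j
    have h1 := aC (Nat.zero_le j)
    rw [hClt 0 (by omega), zero_add, hc1] at h1
    exact h1
  obtain ⟨E, hE, hEm⟩ := conj_exists m R aR hRge
  obtain ⟨B, hB', hBn⟩ := conj_exists n C aC hCge
  have hB : ConjP B C := fun i j => (hB' j i).symm
  set F0 : Finset (ℕ × ℕ) := (range m ×ˢ range n).filter fun p => shf p ∈ F with hF0
  have hF0im : F0.image shf = F := by
    ext ⟨a, b'⟩
    rw [mem_shf]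
    constructor
    · rintro ⟨i, j, h1, rfl, rfl⟩
      exact (mem_filter.1 h1).2
    · intro h
      have h1 := hFsub h
      simp only [mem_product, mem_Icc] at h1
      refine ⟨(a - 1).toNat, (b' - 1).toNat, ?_, by omega, by omega⟩
      simp only [hF0, mem_filter, mem_product, mem_range]
      refine ⟨by omega, ?_⟩
      have : shf ((a - 1).toNat, (b' - 1).toNat) = (a, b') := by
        simp only [shf, Prod.mk.injEq]; omega
      rw [this]; exact h
  have hF0row : ∀ i, (F0.filter fun p => p.1 = i).card = R i := by
    intro i
    by_cases hi : i < m
    · rw [← rowSum_shf, hF0im, hRlt i hi, ← hFrow (i + 1) (mem_Icc.2 (by omega))]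
      push_cast; rfl
    · rw [hRge i (by omega), card_eq_zero, filter_eq_empty_iff]
      rintro ⟨a, b'⟩ hp rfl
      simp only [hF0, mem_filter, mem_product, mem_range] at hp
      omega
  have hF0col : ∀ j, (F0.filter fun p => p.2 = j).card = C j := by
    intro j
    by_cases hj : j < n
    · rw [← colSum_shf, hF0im, hClt j hj, ← hFcol (j + 1) (mem_Icc.2 (by omega))]
      push_cast; rfl
    · rw [hCge j (by omega), card_eq_zero, filter_eq_empty_iff]
      rintro ⟨a, b'⟩ hp rfl
      simp only [hF0, mem_filter, mem_product, mem_range] at hp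
      omega
  have htot : ∑ j ∈ range n, C j = ∑ j ∈ range n, E j := by
    rw [← conj_sum m n R E hE hRn hEm]
    rw [← sum_congr rfl (fun i _ => hF0row i), ← sum_congr rfl (fun i _ => hF0col i)]
    rw [← card_eq_sum_card_fiberwise, ← card_eq_sum_card_fiberwise]
    · intro p hp
      have hp := mem_coe.1 hp
      simp only [hF0, mem_filter, mem_product] at hp
      exact mem_coe.2 hp.1.1
    · intro p hp
      have hp := mem_coe.1 hp
      simp only [hF0, mem_filter, mem_product] at hp
      exact mem_coe.2 hp.1.2
  have D : Dat m n R E C :=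
    ⟨hE, aC, hRn, hEm, hCm, hCge, dominance m R E C F0 hE hEm hF0row hF0col, htot⟩
  obtain ⟨F', g, h, hS, hgh, hg, hh, hle⟩ := core m n _ R E C D rfl
  have hBb : ∀ i, b (i + 1) = B i := by
    intro i
    rw [hb]
    have h1 : (Icc 1 n).filter (fun j => i + 1 ≤ c j) = (range (B i)).image (fun j => j + 1) := by
      ext j
      simp only [mem_filter, mem_Icc, mem_image, mem_range]
      constructor
      · rintro ⟨h1, h2⟩
        refine ⟨j - 1, (hB i (j - 1)).2 ?_, by omega⟩
        rw [hClt _ (by omega), show j - 1 + 1 = j by omega]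
        omega
      · rintro ⟨x, h1, rfl⟩
        have h2 := (hB i x).1 h1
        have h3 := hBn i
        rw [hClt x (by omega)] at h2
        omega
    rw [h1, card_image_of_injective _ (fun a b hab => by simpa using hab), card_range]
  have halpha : ∑ i ∈ Icc 1 m, ((r i : ℤ) - b i).natAbs = disc n E C := by
    rw [← disc_conj m n R E B C hE hB hRn hBn hEm hCm]
    unfold disc
    have h1 : Icc 1 m = (range m).image (fun i => i + 1) := by
      ext j
      simp only [mem_Icc, mem_image, mem_range]
      constructor
      · intro h; exact ⟨j - 1, by omega, by omega⟩
      · rintro ⟨x, h1, rfl⟩; omega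
    rw [h1, sum_image (fun a _ b _ hab => by simpa using hab)]
    apply sum_congr rfl
    intro i hi
    rw [hBb i, ← hRlt i (mem_range.1 hi)]
    omega
  refine ⟨F'.image shf, ?_, ?_, ?_, ?_, ?_⟩
  · rintro ⟨a, b'⟩ hp
    obtain ⟨i, j, h1, rfl, rfl⟩ := (mem_shf _ _ _).1 hp
    have hi : R i ≠ 0 := by
      rw [← hS.row i]
      exact card_ne_zero_of_mem (mem_filter.2 ⟨h1, rfl⟩)
    have hj : C j ≠ 0 := by
      rw [← hS.col j]
      exact card_ne_zero_of_mem (mem_filter.2 ⟨h1, rfl⟩)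
    have hi' : i < m := by
      by_contra hcon
      exact hi (hRge i (by omega))
    have hj' : j < n := by
      by_contra hcon
      exact hj (hCge j (by omega))
    simp only [mem_product, mem_Icc]
    omega
  · intro i hi
    have hi := mem_Icc.1 hi
    have h1 := rowSum_shf F' (i - 1)
    rw [hS.row, hRlt _ (by omega), show i - 1 + 1 = i by omega,
      show ((i - 1 : ℕ) : ℤ) + 1 = i by omega] at h1
    exact h1
  · intro i hi
    have hi := mem_Icc.1 hi
    have h1 := colSum_shf F' (i - 1)
    rw [hS.col, hClt _ (by omega), show i - 1 + 1 = i by omega,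
      show ((i - 1 : ℕ) : ℤ) + 1 = i by omega] at h1
    exact h1
  · have h1 := Lh_symm (F'.image shf) ((yng m n g).image shf)
    have h2 := Lh_yng hgh hg hh
    rw [card_symm_shf] at h1
    omega
  · have h1 := Lv_symm (F'.image shf) ((yng m n g).image shf)
    have h2 := Lv_yng hgh hg hh
    rw [card_symm_shf] at h1
    omega
end

section
/- Let r_1 ≥ ... ≥ r_m and c_1 ≥ ... ≥ c_n be consistent monotone line sums (not necessarily c_1 = m, r_1 = n) with n ≥ 2, and α the corresponding half-L¹-distance between row sums and the conjugate of column sums. Then there exists a set F₂ with these line sums satisfying L_h(F₂) ≤ min(2r_1 + 2α, 2r_1 + 2n − 2) and L_v(F₂) ≤ 2c_1 + 2α. -/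
open Finset

/-- number of run starts not at row 0 -/
def vcost (S : Finset ℕ) : ℕ := (S.filter fun i => i ≠ 0 ∧ i - 1 ∉ S).card

def Vtot (n : ℕ) (G : ℕ → Finset ℕ) : ℕ := ∑ j ∈ range n, vcost (G j)

def Htot (n : ℕ) (G : ℕ → Finset ℕ) : ℕ := ∑ j ∈ range (n - 1), (G (j + 1) \ G j).card

def rcount (n : ℕ) (G : ℕ → Finset ℕ) (i : ℕ) : ℕ := ∑ j ∈ range n, if i ∈ G j then 1 else 0

def lcount (n : ℕ) (l : ℕ → ℕ) (i : ℕ) : ℕ := ∑ j ∈ range n, if i < l j then 1 else 0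

def dsum (n : ℕ) (l c : ℕ → ℕ) : ℕ := ∑ j ∈ range n, Nat.dist (l j) (c j)

lemma vcost_sdiff (S : Finset ℕ) (a d : ℕ) :
    vcost (S \ Ico a (a + d)) ≤ vcost S + min 1 d := by
  unfold vcost
  rcases Nat.eq_zero_or_pos d with rfl | hd
  · simp
  · have : ((S \ Ico a (a + d)).filter fun i => i ≠ 0 ∧ i - 1 ∉ (S \ Ico a (a + d))) ⊆
        insert (a + d) (S.filter fun i => i ≠ 0 ∧ i - 1 ∉ S) := by
      intro i hi
      simp only [mem_filter, mem_sdiff, mem_Ico, mem_insert] at hi ⊢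
      by_cases h : i - 1 ∈ S
      · left
        obtain ⟨⟨h1, h2⟩, h3, h4⟩ := hi
        have : a ≤ i - 1 ∧ i - 1 < a + d := by
          by_contra h5; exact h4 ⟨h, h5⟩
        omega
      · right; exact ⟨hi.1.1, hi.2.1, h⟩
    have h2 := card_le_card this
    have h3 := card_insert_le (a + d) (S.filter fun i => i ≠ 0 ∧ i - 1 ∉ S)
    have : min 1 d = 1 := by omega
    omega

lemma vcost_union (S : Finset ℕ) (a d : ℕ) :
    vcost (S ∪ Ico a (a + d)) ≤ vcost S + min 1 d := by
  unfold vcost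
  rcases Nat.eq_zero_or_pos d with rfl | hd
  · simp
  · have : ((S ∪ Ico a (a + d)).filter fun i => i ≠ 0 ∧ i - 1 ∉ (S ∪ Ico a (a + d))) ⊆
        insert a (S.filter fun i => i ≠ 0 ∧ i - 1 ∉ S) := by
      intro i hi
      simp only [mem_filter, mem_union, mem_Ico, mem_insert, not_or] at hi ⊢
      obtain ⟨h1, h2, h3, h4⟩ := hi
      by_cases h : i ∈ S
      · right; exact ⟨h, h2, h3⟩
      · left
        have := h1.resolve_left h
        omega
    have h2 := card_le_card this
    have h3 := card_insert_le a (S.filter fun i => i ≠ 0 ∧ i - 1 ∉ S)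
    have : min 1 d = 1 := by omega
    omega

lemma vcost_range (a : ℕ) : vcost (range a) = 0 := by
  unfold vcost
  rw [card_eq_zero, filter_eq_empty_iff]
  intro i hi
  simp only [mem_range] at *
  omega

/-- A full row. -/
lemma mem_of_full {n : ℕ} {G : ℕ → Finset ℕ} {l : ℕ → ℕ} {i : ℕ}
    (h : rcount n G i = lcount n l i) (hl : ∀ j < n, i < l j) : ∀ j < n, i ∈ G j := by
  have h1 : lcount n l i = n := by
    unfold lcount
    rw [sum_congr rfl (fun j hj => if_pos (hl j (mem_range.1 hj)))]; simp
  rw [h1] at h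
  intro j hj
  by_contra hc
  have : rcount n G i < ∑ j ∈ range n, 1 := by
    unfold rcount
    apply sum_lt_sum
    · intro k _; split_ifs <;> simp
    · exact ⟨j, mem_range.2 hj, by simp [hc]⟩
  simp at this
  omega

/-- An empty row. -/
lemma not_mem_of_empty {n : ℕ} {G : ℕ → Finset ℕ} {l : ℕ → ℕ} {i : ℕ}
    (h : rcount n G i = lcount n l i) (hl : ∀ j < n, l j ≤ i) : ∀ j < n, i ∉ G j := by
  have h1 : lcount n l i = 0 := by
    unfold lcount
    apply sum_eq_zero
    intro j hj
    exact if_neg (not_lt.2 (hl j (mem_range.1 hj)))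
  rw [h1] at h
  intro j hj hc
  unfold rcount at h
  rw [sum_eq_zero_iff] at h
  have := h j (mem_range.2 hj)
  simp [hc] at this

def cat (t : ℕ) (A B : ℕ → Finset ℕ) : ℕ → Finset ℕ := fun j => if j < t then A j else B (j - t)

lemma sum_range_cat {t s : ℕ} (f g h : ℕ → ℕ) (h1 : ∀ j < t, f j = g j)
    (h2 : ∀ j < s, f (t + j) = h j) :
    ∑ j ∈ range (t + s), f j = ∑ j ∈ range t, g j + ∑ j ∈ range s, h j := by
  rw [sum_range_add]
  congr 1
  · exact sum_congr rfl fun j hj => h1 j (mem_range.1 hj)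
  · exact sum_congr rfl fun j hj => h2 j (mem_range.1 hj)

lemma cat_lt {t j : ℕ} {A B : ℕ → Finset ℕ} (h : j < t) : cat t A B j = A j := by
  simp [cat, h]

lemma cat_add {t j : ℕ} {A B : ℕ → Finset ℕ} : cat t A B (t + j) = B j := by
  simp [cat]

lemma Vtot_cat (t s : ℕ) (A B : ℕ → Finset ℕ) :
    Vtot (t + s) (cat t A B) = Vtot t A + Vtot s B :=
  sum_range_cat _ _ _ (fun j hj => by rw [cat_lt hj]) (fun j hj => by rw [cat_add])

lemma rcount_cat (t s : ℕ) (A B : ℕ → Finset ℕ) (i : ℕ) :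
    rcount (t + s) (cat t A B) i = rcount t A i + rcount s B i :=
  sum_range_cat _ _ _ (fun j hj => by rw [cat_lt hj]) (fun j hj => by rw [cat_add])

lemma Htot_cat (t s : ℕ) (A B : ℕ → Finset ℕ) (ht : 1 ≤ t) (hs : 1 ≤ s)
    (hAB : B 0 ⊆ A (t - 1)) :
    Htot (t + s) (cat t A B) = Htot t A + Htot s B := by
  unfold Htot
  have e : t + s - 1 = (t - 1) + (1 + (s - 1)) := by omega
  rw [e, sum_range_add]
  congr 1
  · apply sum_congr rfl
    intro j hj
    have := mem_range.1 hj
    rw [cat_lt (by omega), cat_lt (by omega)]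
  · rw [sum_range_add]
    have : ∑ x ∈ range 1, (cat t A B (t - 1 + x + 1) \ cat t A B (t - 1 + x)).card = 0 := by
      rw [sum_range_one]
      have e1 : t - 1 + 0 + 1 = t + 0 := by omega
      rw [e1, cat_add, cat_lt (by omega), card_eq_zero, sdiff_eq_empty_iff_subset]
      exact hAB
    rw [this, zero_add]
    apply sum_congr rfl
    intro j hj
    have e1 : t - 1 + (1 + j) = t + j := by omega
    rw [e1, add_assoc, cat_add, cat_add]

/-- sum after a change at one index -/
lemma sum_update_le {n k d : ℕ} {f g : ℕ → ℕ} (h : ∀ j < n, j ≠ k → f j ≤ g j)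
    (hk : k < n → f k ≤ g k + d) : ∑ j ∈ range n, f j ≤ ∑ j ∈ range n, g j + d := by
  by_cases hkn : k < n
  · rw [← add_sum_erase _ _ (mem_range.2 hkn), ← add_sum_erase _ g (mem_range.2 hkn)]
    have := sum_le_sum (s := (range n).erase k) (f := f) (g := g) (fun j hj => by
      rw [mem_erase, mem_range] at hj
      exact h j hj.2 hj.1)
    have := hk hkn
    omega
  · have := sum_le_sum (s := (range n)) (f := f) (g := g) (fun j hj => by
      rw [mem_range] at hj
      exact h j hj (by omega))
    omega

lemma sum_update_eq {n k : ℕ} {f g : ℕ → ℕ} {a b : ℕ} (h : ∀ j < n, j ≠ k → f j = g j)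
    (hk : k < n) (hab : f k + a = g k + b) :
    ∑ j ∈ range n, f j + a = ∑ j ∈ range n, g j + b := by
  rw [← add_sum_erase _ _ (mem_range.2 hk), ← add_sum_erase _ g (mem_range.2 hk)]
  have : ∑ j ∈ (range n).erase k, f j = ∑ j ∈ (range n).erase k, g j :=
    sum_congr rfl (fun j hj => by
      rw [mem_erase, mem_range] at hj
      exact h j hj.2 hj.1)
  omega

/-- counting lemma: conjugate of a bounded sequence. -/
lemma sum_ind_lt (N x : ℕ) (h : x ≤ N) : ∑ i ∈ range N, (if i < x then 1 else 0) = x := by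
  rw [← card_filter]
  have : (range N).filter (fun i => i < x) = range x := by
    ext i; simp; omega
  rw [this, card_range]

lemma dist_ind (N x y : ℕ) (hx : x ≤ N) (hy : y ≤ N) :
    ∑ i ∈ range N, Nat.dist (if i < x then 1 else 0) (if i < y then 1 else 0) = Nat.dist x y := by
  have : ∀ i, Nat.dist (if i < x then 1 else 0) (if i < y then 1 else 0)
      = (if i < max x y then 1 else 0) - (if i < min x y then 1 else 0) := by
    intro i
    unfold Nat.dist
    split_ifs <;> omega
  simp only [this]
  rw [sum_tsub_distrib, sum_ind_lt _ _ (by omega), sum_ind_lt _ _ (by omega)]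
  · unfold Nat.dist; omega
  · intro i _; split_ifs <;> omega

lemma dist_sum_le {ι : Type*} (s : Finset ι) (f g : ι → ℕ) :
    Nat.dist (∑ i ∈ s, f i) (∑ i ∈ s, g i) ≤ ∑ i ∈ s, Nat.dist (f i) (g i) := by
  classical
  induction s using Finset.induction_on with
  | empty => simp [Nat.dist]
  | insert a s ha ih =>
    rw [sum_insert ha, sum_insert ha, sum_insert ha]
    unfold Nat.dist at *
    omega

/-- If `x j = #{i < N : j < R i}` and likewise for `y`, the L1-distance does not increase. -/
lemma dist_conj_le (n N : ℕ) (R B x y : ℕ → ℕ) (hR : ∀ i < N, R i ≤ n) (hB : ∀ i < N, B i ≤ n)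
    (hx : ∀ j < n, x j = ∑ i ∈ range N, if j < R i then 1 else 0)
    (hy : ∀ j < n, y j = ∑ i ∈ range N, if j < B i then 1 else 0) :
    ∑ j ∈ range n, Nat.dist (x j) (y j) ≤ ∑ i ∈ range N, Nat.dist (R i) (B i) := by
  calc ∑ j ∈ range n, Nat.dist (x j) (y j)
      ≤ ∑ j ∈ range n, ∑ i ∈ range N,
        Nat.dist (if j < R i then 1 else 0) (if j < B i then 1 else 0) := by
        apply sum_le_sum
        intro j hj
        rw [hx j (mem_range.1 hj), hy j (mem_range.1 hj)]
        exact dist_sum_le _ _ _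
    _ = ∑ i ∈ range N, Nat.dist (R i) (B i) := by
        rw [sum_comm]
        apply sum_congr rfl
        intro i hi
        exact dist_ind _ _ _ (hR i (mem_range.1 hi)) (hB i (mem_range.1 hi))

lemma lcount_le (n : ℕ) (l : ℕ → ℕ) (i : ℕ) : lcount n l i ≤ n := by
  have := sum_le_sum (s := range n) (f := fun j => if i < l j then 1 else 0) (g := fun _ => 1)
    (fun j _ => by split_ifs <;> simp)
  simpa [lcount] using this

lemma lcount_anti (n : ℕ) (l : ℕ → ℕ) {i i' : ℕ} (h : i ≤ i') : lcount n l i' ≤ lcount n l i := by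
  unfold lcount
  apply sum_le_sum
  intro j _
  split_ifs <;> omega

/-- for antitone `c`, `j < lcount i ↔ i < c j`. -/
lemma lt_lcount_iff {n : ℕ} {c : ℕ → ℕ} (hc : ∀ i j, i ≤ j → j < n → c j ≤ c i) {i j : ℕ}
    (hj : j < n) : j < lcount n c i ↔ i < c j := by
  constructor
  · intro h
    by_contra hcon
    have : lcount n c i ≤ j := by
      unfold lcount
      rw [← card_filter]
      calc _ ≤ (range j).card := by
            apply card_le_card
            intro k hk
            simp only [mem_filter, mem_range] at *
            by_contra h2
            have := hc j k (by omega) hk.1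
            omega
        _ = j := card_range j
    omega
  · intro h
    unfold lcount
    rw [← card_filter]
    calc j < (range (j+1)).card := by simp
      _ ≤ _ := by
            apply card_le_card
            intro k hk
            simp only [mem_filter, mem_range] at *
            have := hc k j (by omega) hj
            omega

/-- Sorting the lanes. -/
lemma exists_sorted (n : ℕ) (l c : ℕ → ℕ) (hc : ∀ i j, i ≤ j → j < n → c j ≤ c i)
    (hD : ∀ t ≤ n, ∑ j ∈ range t, c j ≤ ∑ j ∈ range t, l j)
    (hn : ∑ j ∈ range n, c j = ∑ j ∈ range n, l j) :
    ∃ l' : ℕ → ℕ, (∀ i j, i ≤ j → l' j ≤ l' i) ∧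
    (∀ t ≤ n, ∑ j ∈ range t, c j ≤ ∑ j ∈ range t, l' j) ∧
    (∑ j ∈ range n, c j = ∑ j ∈ range n, l' j) ∧
    (∀ i, lcount n l' i = lcount n l i) ∧ dsum n l' c ≤ dsum n l c := by
  set N := ∑ j ∈ range n, l j with hN
  have hlN : ∀ j < n, l j ≤ N := fun j hj =>
    single_le_sum (f := l) (fun _ _ => Nat.zero_le _) (mem_range.2 hj)
  have hcN : ∀ j < n, c j ≤ N := fun j hj => by
    rw [← hn]
    exact single_le_sum (f := c) (fun _ _ => Nat.zero_le _) (mem_range.2 hj)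
  let l' : ℕ → ℕ := fun j => ∑ i ∈ range N, if j < lcount n l i then 1 else 0
  have hpre : ∀ t, ∑ j ∈ range t, l' j = ∑ i ∈ range N, min t (lcount n l i) := by
    intro t
    simp only [l']
    rw [sum_comm]
    apply sum_congr rfl
    intro i _
    rw [← card_filter]
    have : (range t).filter (fun j => j < lcount n l i) = range (min t (lcount n l i)) := by
      ext; simp
    rw [this, card_range]
  have hpl : ∀ t ≤ n, ∑ j ∈ range t, l j = ∑ i ∈ range N, lcount t l i := by
    intro t ht
    unfold lcount
    rw [sum_comm]
    apply sum_congr rfl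
    intro j hj
    rw [sum_ind_lt _ _ (hlN j (by have := mem_range.1 hj; omega))]
  have hmono : ∀ t ≤ n, ∀ i, lcount t l i ≤ lcount n l i := by
    intro t ht i
    unfold lcount
    exact sum_le_sum_of_subset (range_subset_range.2 ht)
  have hlc : ∀ i, N ≤ i → lcount n l i = 0 := by
    intro i hi
    unfold lcount
    apply sum_eq_zero
    intro j hj
    have := hlN j (mem_range.1 hj)
    rw [if_neg (by omega)]
  refine ⟨l', ?_, ?_, ?_, ?_, ?_⟩
  · intro i j hij
    apply sum_le_sum
    intro k _
    split_ifs <;> omega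
  · intro t ht
    refine (hD t ht).trans ?_
    rw [hpre, hpl t ht]
    apply sum_le_sum
    intro i _
    exact le_min (lcount_le _ _ _) (hmono t ht i)
  · rw [hn, hN, hpre, hpl n le_rfl]
    apply sum_congr rfl
    intro i _
    rw [min_eq_right (lcount_le _ _ _)]
  · intro i
    have key : ∀ j, i < l' j ↔ j < lcount n l i := by
      intro j
      have := @lt_lcount_iff N (fun i => lcount n l i) (fun a b hab _ => lcount_anti n l hab)
      by_cases hi : i < N
      · exact this hi
      · rw [hlc i (by omega)]
        have h2 : l' j ≤ N := by
          have := sum_le_sum (s := range N) (f := fun i => if j < lcount n l i then 1 else 0)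
            (g := fun _ => 1) (fun j _ => by split_ifs <;> simp)
          simp only [sum_const, card_range, smul_eq_mul, mul_one] at this
          exact this
        constructor <;> intro <;> omega
    conv_lhs => unfold lcount
    simp only [key]
    exact sum_ind_lt _ _ (lcount_le _ _ _)
  · calc dsum n l' c ≤ ∑ i ∈ range N, Nat.dist (lcount n l i) (lcount n c i) := by
          apply dist_conj_le n N _ _ _ _ (fun i _ => lcount_le _ _ _) (fun i _ => lcount_le _ _ _)
          · intro j _; rfl
          · intro j hj
            simp only [lt_lcount_iff hc hj]
            exact (sum_ind_lt _ _ (hcN j hj)).symm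
      _ ≤ ∑ i ∈ range N, ∑ j ∈ range n, Nat.dist (if i < l j then 1 else 0) (if i < c j then 1 else 0) :=
          sum_le_sum fun i _ => dist_sum_le _ _ _
      _ = dsum n l c := by
          rw [sum_comm]
          apply sum_congr rfl
          intro j hj
          exact dist_ind _ _ _ (hlN j (mem_range.1 hj)) (hcN j (mem_range.1 hj))

def Hyp (n : ℕ) (l c : ℕ → ℕ) : Prop :=
  (∀ i j, i ≤ j → j < n → c j ≤ c i) ∧
  (∀ t ≤ n, ∑ j ∈ range t, c j ≤ ∑ j ∈ range t, l j) ∧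
  ∑ j ∈ range n, c j = ∑ j ∈ range n, l j

def Good (n : ℕ) (l c : ℕ → ℕ) : Prop :=
  ∃ G : ℕ → Finset ℕ, (∀ j < n, (G j).card = c j) ∧ (∀ i, rcount n G i = lcount n l i) ∧
    Vtot n G ≤ n - 1 ∧ 2 * Vtot n G ≤ dsum n l c ∧ 2 * Htot n G ≤ dsum n l c

lemma stepA_s12 (t s δ : ℕ) (l c : ℕ → ℕ) (ht : 1 ≤ t) (hs : 1 ≤ s)
    (hl : ∀ i j, i ≤ j → l j ≤ l i)
    (h0 : c 0 + δ ≤ l 0) (h1 : l (t + s - 1) + δ ≤ c (t + s - 1))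
    (hA : c (t + s - 1) ≤ l (t - 1))
    (hL : Good t l (fun j => c j + if j = 0 then δ else 0))
    (hR : Good s (fun j => l (t + j) + if j = s - 1 then δ else 0) (fun j => c (t + j))) :
    Good (t + s) l c := by
  obtain ⟨A, A1, A2, A3, A4, A5⟩ := hL
  obtain ⟨B, B1, B2, B3, B4, B5⟩ := hR
  set a := l (t + s - 1) with ha
  have hfull : ∀ i < l (t - 1), ∀ j < t, i ∈ A j := by
    intro i hi
    apply mem_of_full (A2 i)
    intro j hj
    have := hl j (t - 1) (by omega)
    omega
  have hY : Ico a (a + δ) ⊆ A 0 := by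
    intro i hi
    rw [mem_Ico] at hi
    exact hfull i (by omega) 0 (by omega)
  have hB0 : B 0 ⊆ A (t - 1) := by
    intro i hi
    by_contra hcon
    have hi2 : l (t - 1) ≤ i := by
      by_contra h; exact hcon (hfull i (by omega) _ (by omega))
    refine not_mem_of_empty (B2 i) ?_ 0 (by omega) hi
    intro j hj
    try dsimp only
    split_ifs with h
    · have : t + j = t + s - 1 := by omega
      rw [this]; omega
    · have := hl (t - 1) (t + j) (by omega)
      omega
  let C := cat t A B
  have hC0 : C 0 = A 0 := cat_lt (by omega)
  let G : ℕ → Finset ℕ := fun j => if j = 0 then C 0 \ Ico a (a + δ) else C j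
  have hG0 : G 0 = C 0 \ Ico a (a + δ) := rfl
  have hG : ∀ j, j ≠ 0 → G j = C j := fun j hj => if_neg hj
  have hd : dsum t l (fun j => c j + if j = 0 then δ else 0)
      + dsum s (fun j => l (t + j) + if j = s - 1 then δ else 0) (fun j => c (t + j)) + 2 * δ
      = dsum (t + s) l c := by
    have e1 : dsum t l (fun j => c j + if j = 0 then δ else 0) + δ = dsum t l c + 0 := by
      apply sum_update_eq (k := 0)
      · intro j _ hj; simp [hj]
      · omega
      · simp only [if_true, Nat.dist]; omega
    have e2 : dsum s (fun j => l (t + j) + if j = s - 1 then δ else 0) (fun j => c (t + j)) + δ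
        = dsum s (fun j => l (t + j)) (fun j => c (t + j)) + 0 := by
      apply sum_update_eq (k := s - 1)
      · intro j _ hj; simp [hj]
      · omega
      · have : t + (s - 1) = t + s - 1 := by omega
        simp only [if_true, Nat.dist, this]; omega
    have e3 : dsum (t + s) l c = dsum t l c + dsum s (fun j => l (t + j)) (fun j => c (t + j)) :=
      sum_range_add _ _ _
    omega
  have hV : Vtot (t + s) G ≤ Vtot (t + s) C + min 1 δ := by
    apply sum_update_le (k := 0)
    · intro j _ hj; rw [hG j hj]
    · intro _; rw [hG0]; exact vcost_sdiff _ _ _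
  rw [Vtot_cat] at hV
  have hH : Htot (t + s) G ≤ Htot (t + s) C + δ := by
    apply sum_update_le (k := 0)
    · intro j _ hj; rw [hG j hj, hG (j + 1) (by omega)]
    · intro _
      rw [hG0, hG (0 + 1) (by omega)]
      have : C (0 + 1) \ (C 0 \ Ico a (a + δ)) ⊆ (C (0 + 1) \ C 0) ∪ Ico a (a + δ) := by
        intro x hx
        simp only [mem_sdiff, mem_union] at *
        tauto
      refine (card_le_card this).trans ((card_union_le _ _).trans ?_)
      simp
  rw [Htot_cat t s A B ht hs hB0] at hH
  refine ⟨G, ?_, ?_, ?_, ?_, ?_⟩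
  · intro j hj
    by_cases hj0 : j = 0
    · subst hj0
      have := A1 0 (by omega)
      rw [hG0, hC0, card_sdiff_of_subset hY, this]
      simp
    · rw [hG j hj0]
      by_cases hjt : j < t
      · have := A1 j hjt
        simp only [hj0, if_false] at this
        rw [show C j = A j from cat_lt hjt, this]; rfl
      · obtain ⟨k, rfl⟩ := Nat.exists_eq_add_of_le (not_lt.1 hjt)
        rw [show C (t + k) = B k from cat_add, B1 k (by omega)]
  · intro i
    have e1 : rcount (t + s) G i + (if i ∈ Ico a (a + δ) then 1 else 0)
        = rcount (t + s) C i + 0 := by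
      apply sum_update_eq (k := 0)
      · intro j _ hj; rw [hG j hj]
      · omega
      · rw [hG0, hC0]
        have := @hY i
        by_cases h1 : i ∈ Ico a (a + δ)
        · simp [h1, this h1, -mem_Ico]
        · simp [h1, -mem_Ico]
    have e2 : lcount s (fun j => l (t + j) + if j = s - 1 then δ else 0) i + 0
        = lcount s (fun j => l (t + j)) i + (if i ∈ Ico a (a + δ) then 1 else 0) := by
      apply sum_update_eq (k := s - 1)
      · intro j _ hj; simp [hj]
      · omega
      · have : t + (s - 1) = t + s - 1 := by omega
        simp only [if_true, this, mem_Ico, ← ha]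
        split_ifs <;> omega
    have e3 : lcount (t + s) l i = lcount t l i + lcount s (fun j => l (t + j)) i :=
      sum_range_add _ _ _
    have e4 := rcount_cat t s A B i
    have := A2 i
    have := B2 i
    change rcount (t + s) C i = _ at e4
    omega
  · omega
  · omega
  · omega

lemma stepB_s12 (t s δ : ℕ) (l c : ℕ → ℕ) (ht : 1 ≤ t) (hs : 1 ≤ s)
    (hl : ∀ i j, i ≤ j → l j ≤ l i) (hc : ∀ i j, i ≤ j → j < t + s → c j ≤ c i)
    (h0 : c 0 + δ ≤ l 0) (h1 : l (t + s - 1) + δ ≤ c (t + s - 1))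
    (hA : l (t - 1) < c (t + s - 1))
    (hL : Good t (fun j => l j - if j = 0 then δ else 0) c)
    (hR : Good s (fun j => l (t + j)) (fun j => c (t + j) - if j = s - 1 then δ else 0)) :
    Good (t + s) l c := by
  obtain ⟨A, A1, A2, A3, A4, A5⟩ := hL
  obtain ⟨B, B1, B2, B3, B4, B5⟩ := hR
  set a := l 0 - δ with ha
  have hcc := hc 0 (t + s - 1) (by omega) (by omega)
  have hlt := hl (t - 1) t (by omega)
  have hemp : ∀ i, l t ≤ i → ∀ j < s, i ∉ B j := by
    intro i hi
    apply not_mem_of_empty (B2 i)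
    intro j hj
    have := hl t (t + j) (by omega)
    try dsimp only
    omega
  have hB0 : B 0 ⊆ A (t - 1) := by
    intro i hi
    have hi2 : i < l t := by
      by_contra h; exact hemp i (by omega) 0 (by omega) hi
    refine mem_of_full (A2 i) ?_ _ (by omega)
    intro j hj
    try dsimp only
    split_ifs with h
    · subst h; omega
    · have := hl j t (by omega)
      omega
  have hY : Disjoint (B (s - 1)) (Ico a (a + δ)) := by
    rw [disjoint_left]
    intro i hi hi2
    rw [mem_Ico] at hi2
    exact hemp i (by omega) (s - 1) (by omega) hi
  let C := cat t A B
  have hCl : C (t + s - 1) = B (s - 1) := by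
    have : t + s - 1 = t + (s - 1) := by omega
    rw [this]; exact cat_add
  let G : ℕ → Finset ℕ := fun j => if j = t + s - 1 then C (t + s - 1) ∪ Ico a (a + δ) else C j
  have hGl : G (t + s - 1) = C (t + s - 1) ∪ Ico a (a + δ) := if_pos rfl
  have hG : ∀ j, j ≠ t + s - 1 → G j = C j := fun j hj => if_neg hj
  have ets : t + (s - 1) = t + s - 1 := by omega
  have hd : dsum t (fun j => l j - if j = 0 then δ else 0) c
      + dsum s (fun j => l (t + j)) (fun j => c (t + j) - if j = s - 1 then δ else 0) + 2 * δ
      = dsum (t + s) l c := by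
    have e1 : dsum t (fun j => l j - if j = 0 then δ else 0) c + δ = dsum t l c + 0 := by
      apply sum_update_eq (k := 0)
      · intro j _ hj; simp [hj]
      · omega
      · simp only [if_true, Nat.dist]; omega
    have e2 : dsum s (fun j => l (t + j)) (fun j => c (t + j) - if j = s - 1 then δ else 0) + δ
        = dsum s (fun j => l (t + j)) (fun j => c (t + j)) + 0 := by
      apply sum_update_eq (k := s - 1)
      · intro j _ hj; simp [hj]
      · omega
      · simp only [if_true, Nat.dist, ets]; omega
    have e3 : dsum (t + s) l c = dsum t l c + dsum s (fun j => l (t + j)) (fun j => c (t + j)) :=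
      sum_range_add _ _ _
    omega
  have hV : Vtot (t + s) G ≤ Vtot (t + s) C + min 1 δ := by
    apply sum_update_le (k := t + s - 1)
    · intro j _ hj; rw [hG j hj]
    · intro _; rw [hGl]; exact vcost_union _ _ _
  rw [Vtot_cat] at hV
  have hH : Htot (t + s) G ≤ Htot (t + s) C + δ := by
    apply sum_update_le (k := t + s - 2)
    · intro j _ hj; rw [hG j (by omega), hG (j + 1) (by omega)]
    · intro _
      have e : t + s - 2 + 1 = t + s - 1 := by omega
      rw [e, hGl, hG (t + s - 2) (by omega)]
      have : (C (t + s - 1) ∪ Ico a (a + δ)) \ C (t + s - 2) ⊆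
          (C (t + s - 1) \ C (t + s - 2)) ∪ Ico a (a + δ) := by
        intro x hx
        simp only [mem_sdiff, mem_union] at *
        tauto
      refine (card_le_card this).trans ((card_union_le _ _).trans ?_)
      simp
  rw [Htot_cat t s A B ht hs hB0] at hH
  refine ⟨G, ?_, ?_, ?_, ?_, ?_⟩
  · intro j hj
    by_cases hj0 : j = t + s - 1
    · subst hj0
      have := B1 (s - 1) (by omega)
      rw [hGl, hCl, card_union_of_disjoint hY, this]
      simp only [if_true, ets, Nat.card_Ico]
      omega
    · rw [hG j hj0]
      by_cases hjt : j < t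
      · rw [show C j = A j from cat_lt hjt, A1 j hjt]
      · obtain ⟨k, rfl⟩ := Nat.exists_eq_add_of_le (not_lt.1 hjt)
        rw [show C (t + k) = B k from cat_add, B1 k (by omega)]
        simp only [show k ≠ s - 1 by omega, if_false, Nat.sub_zero]
  · intro i
    have e1 : rcount (t + s) G i + 0
        = rcount (t + s) C i + (if i ∈ Ico a (a + δ) then 1 else 0) := by
      apply sum_update_eq (k := t + s - 1)
      · intro j _ hj; rw [hG j hj]
      · omega
      · rw [hGl, hCl]
        have := fun h : i ∈ B (s - 1) => disjoint_left.1 hY h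
        by_cases h1 : i ∈ Ico a (a + δ)
        · have h2 : i ∉ B (s - 1) := fun h => this h h1
          simp [h1, h2, -mem_Ico]
        · simp [h1, -mem_Ico]
    have e2 : lcount t (fun j => l j - if j = 0 then δ else 0) i
          + (if i ∈ Ico a (a + δ) then 1 else 0)
        = lcount t l i + 0 := by
      apply sum_update_eq (k := 0)
      · intro j _ hj; simp [hj]
      · omega
      · simp only [if_true, mem_Ico, ← ha]
        split_ifs <;> omega
    have e3 : lcount (t + s) l i = lcount t l i + lcount s (fun j => l (t + j)) i :=
      sum_range_add _ _ _
    have e4 := rcount_cat t s A B i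
    have := A2 i
    have := B2 i
    change rcount (t + s) C i = _ at e4
    omega
  · omega
  · omega
  · omega

lemma core_s12 : ∀ (n : ℕ) (l c : ℕ → ℕ), Hyp n l c → Good n l c := by
  intro n
  induction n using Nat.strong_induction_on with
  | _ n ih =>
  intro l c ⟨hc, hD, hn⟩
  rcases Nat.lt_or_ge n 2 with hn2 | hn2
  · refine ⟨fun j => range (l j), ?_, ?_, ?_, ?_, ?_⟩
    · intro j hj
      have : n = 1 := by omega
      subst this
      have : j = 0 := by omega
      subst this
      simp at hn
      simp [hn]
    · intro i; simp [rcount, lcount]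
    · simp [Vtot, vcost_range]
    · simp [Vtot, vcost_range]
    · have : n - 1 = 0 := by omega
      simp [Htot, this]
  obtain ⟨l', hl, hD', hn', hcount, hds⟩ := exists_sorted n l c hc hD hn
  suffices h : Good n l' c by
    obtain ⟨G, g1, g2, g3, g4, g5⟩ := h
    exact ⟨G, g1, fun i => (g2 i).trans (hcount i), g3, g4.trans hds, g5.trans hds⟩
  clear hD hn hcount hds
  obtain ⟨t, htm, hmin⟩ := exists_min_image (Ico 1 n)
    (fun t => ∑ j ∈ range t, l' j - ∑ j ∈ range t, c j) ⟨1, by simp; omega⟩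
  rw [mem_Ico] at htm
  obtain ⟨s, rfl⟩ := Nat.exists_eq_add_of_le htm.2.le
  obtain ⟨δ, hδ⟩ := Nat.exists_eq_add_of_le (hD' t (by omega))
  have hmin' : ∀ k, 1 ≤ k → k < t + s → ∑ j ∈ range k, c j + δ ≤ ∑ j ∈ range k, l' j := by
    intro k hk1 hk2
    have h1 := hmin k (mem_Ico.2 ⟨hk1, hk2⟩)
    have h2 := hD' k (by omega)
    try dsimp only at h1
    omega
  have ht : 1 ≤ t := htm.1
  have hs : 1 ≤ s := by omega
  have h0 : c 0 + δ ≤ l' 0 := by simpa using hmin' 1 le_rfl (by omega)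
  have h1 : l' (t + s - 1) + δ ≤ c (t + s - 1) := by
    have e1 := hmin' (t + s - 1) (by omega) (by omega)
    have e2 : t + s = (t + s - 1) + 1 := by omega
    have e3 := hn'
    rw [e2, sum_range_succ, sum_range_succ] at e3
    omega
  have sc : ∀ k, ∑ j ∈ range (t + k), c j = ∑ j ∈ range t, c j + ∑ j ∈ range k, c (t + j) :=
    fun k => sum_range_add _ _ _
  have sl : ∀ k, ∑ j ∈ range (t + k), l' j = ∑ j ∈ range t, l' j + ∑ j ∈ range k, l' (t + j) :=
    fun k => sum_range_add _ _ _
  have hscn := sc s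
  have hsln := sl s
  by_cases hA : c (t + s - 1) ≤ l' (t - 1)
  · have eL : ∀ k, 1 ≤ k → ∑ j ∈ range k, (c j + if j = 0 then δ else 0) + 0
        = ∑ j ∈ range k, c j + δ := by
      intro k hk
      apply sum_update_eq (k := 0)
      · intro j _ hj; simp [hj]
      · omega
      · simp
    have eR : ∑ j ∈ range s, (l' (t + j) + if j = s - 1 then δ else 0) + 0
        = ∑ j ∈ range s, l' (t + j) + δ := by
      apply sum_update_eq (k := s - 1)
      · intro j _ hj; simp [hj]
      · omega
      · simp
    apply stepA_s12 t s δ l' c ht hs hl h0 h1 hA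
    · apply ih t (by omega)
      unfold Hyp
      beta_reduce
      refine ⟨?_, ?_, ?_⟩
      · intro i j hij hj
        have := hc i j hij (by omega)
        try dsimp only
        split_ifs <;> omega
      · intro k hk
        rcases Nat.eq_zero_or_pos k with rfl | hk0
        · simp
        · have := eL k hk0
          have := hmin' k hk0 (by omega)
          omega
      · have := eL t ht
        omega
    · apply ih s (by omega)
      unfold Hyp
      beta_reduce
      refine ⟨?_, ?_, ?_⟩
      · intro i j hij hj
        exact hc _ _ (by omega) (by omega)
      · intro k hk
        rcases Nat.lt_or_ge k s with hks | hks
        · have e : ∑ j ∈ range k, l' (t + j)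
              ≤ ∑ j ∈ range k, (l' (t + j) + if j = s - 1 then δ else 0) :=
            sum_le_sum fun j _ => by omega
          have := hmin' (t + k) (by omega) (by omega)
          have := sc k
          have := sl k
          omega
        · have : k = s := by omega
          subst this
          omega
      · omega
  · have eL : ∀ k, 1 ≤ k → ∑ j ∈ range k, (l' j - if j = 0 then δ else 0) + δ
        = ∑ j ∈ range k, l' j + 0 := by
      intro k hk
      apply sum_update_eq (k := 0)
      · intro j _ hj; simp [hj]
      · omega
      · simp; omega
    have eR : ∑ j ∈ range s, (c (t + j) - if j = s - 1 then δ else 0) + δ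
        = ∑ j ∈ range s, c (t + j) + 0 := by
      apply sum_update_eq (k := s - 1)
      · intro j _ hj; simp [hj]
      · omega
      · have : t + (s - 1) = t + s - 1 := by omega
        simp only [if_true, this]; omega
    apply stepB_s12 t s δ l' c ht hs hl hc h0 h1 (by omega)
    · apply ih t (by omega)
      unfold Hyp
      beta_reduce
      refine ⟨?_, ?_, ?_⟩
      · intro i j hij hj
        exact hc i j hij (by omega)
      · intro k hk
        rcases Nat.eq_zero_or_pos k with rfl | hk0
        · simp
        · have := eL k hk0
          have := hmin' k hk0 (by omega)
          omega
      · have := eL t ht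
        omega
    · apply ih s (by omega)
      unfold Hyp
      beta_reduce
      refine ⟨?_, ?_, ?_⟩
      · intro i j hij hj
        have := hc (t + i) (t + j) (by omega) (by omega)
        try dsimp only
        split_ifs <;> omega
      · intro k hk
        rcases Nat.lt_or_ge k s with hks | hks
        · have e : ∑ j ∈ range k, (c (t + j) - if j = s - 1 then δ else 0)
              ≤ ∑ j ∈ range k, c (t + j) :=
            sum_le_sum fun j _ => by omega
          have := hmin' (t + k) (by omega) (by omega)
          have := sc k
          have := sl k
          omega
        · have : k = s := by omega
          subst this
          omega
      · omega

lemma shift_count {α : Type*} [DecidableEq α] (e : α ≃ α) (F : Finset α) :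
    (F.filter fun p => e p ∉ F).card = (F.filter fun p => e.symm p ∉ F).card := by
  have h1 := card_filter_add_card_filter_not (s := F) (fun p => e p ∈ F)
  have h2 := card_filter_add_card_filter_not (s := F) (fun p => e.symm p ∈ F)
  have h3 : (F.filter fun p => e p ∈ F).card = (F.filter fun p => e.symm p ∈ F).card := by
    apply card_bij (fun p _ => e p)
    · intro a ha
      simp only [mem_filter, Equiv.symm_apply_apply] at *
      exact ⟨ha.2, ha.1⟩
    · intro a _ b _ h
      exact e.injective h
    · intro b hb
      simp only [mem_filter] at hb
      exact ⟨e.symm b, by simp [hb.1, hb.2], by simp⟩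
  omega

lemma boundary_le {α : Type*} [DecidableEq α] (e : α ≃ α) (F : Finset α) :
    ((F ∪ F.image e.symm).filter fun p => decide (p ∈ F) ≠ decide (e p ∈ F)).card
      ≤ 2 * (F.filter fun p => e.symm p ∉ F).card := by
  have h : ((F ∪ F.image e.symm).filter fun p => decide (p ∈ F) ≠ decide (e p ∈ F)) ⊆
      (F.filter fun p => e p ∉ F) ∪ (F.filter fun p => e.symm p ∉ F).image e.symm := by
    intro p hp
    simp only [mem_filter, mem_union, mem_image, ne_eq, decide_eq_decide] at hp ⊢
    by_cases h1 : p ∈ F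
    · left
      refine ⟨h1, fun h2 => hp.2 ⟨fun _ => h2, fun _ => h1⟩⟩
    · right
      have h2 : e p ∈ F := by
        by_contra h2
        exact hp.2 ⟨fun h => absurd h h1, fun h => absurd h h2⟩
      exact ⟨e p, ⟨h2, by simpa using h1⟩, by simp⟩
  have h2 := card_le_card h
  have h3 := card_union_le (F.filter fun p => e p ∉ F)
    ((F.filter fun p => e.symm p ∉ F).image e.symm)
  have h4 := card_image_le (s := F.filter fun p => e.symm p ∉ F) (f := e.symm)
  have h5 := shift_count e F
  omega

def shV : ℤ × ℤ ≃ ℤ × ℤ where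
  toFun p := (p.1 + 1, p.2)
  invFun p := (p.1 - 1, p.2)
  left_inv p := by simp
  right_inv p := by simp

def shH : ℤ × ℤ ≃ ℤ × ℤ where
  toFun p := (p.1, p.2 + 1)
  invFun p := (p.1, p.2 - 1)
  left_inv p := by simp
  right_inv p := by simp

lemma Lh_le (F : Finset (ℤ × ℤ)) :
    Lh F ≤ 2 * (F.filter fun p => (p.1 - 1, p.2) ∉ F).card := boundary_le shV F

lemma Lv_le (F : Finset (ℤ × ℤ)) :
    Lv F ≤ 2 * (F.filter fun p => (p.1, p.2 - 1) ∉ F).card := boundary_le shH F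

/-- The planar set built from columns. -/
def build (m n : ℕ) (G : ℕ → Finset ℕ) : Finset (ℤ × ℤ) :=
  ((range m ×ˢ range n).filter fun q => q.1 ∈ G q.2).image
    fun q => ((q.1 : ℤ) + 1, (q.2 : ℤ) + 1)

lemma mem_build {m n : ℕ} {G : ℕ → Finset ℕ} {i j : ℕ} :
    (((i : ℤ) + 1, (j : ℤ) + 1) ∈ build m n G) ↔ (i < m ∧ j < n) ∧ i ∈ G j := by
  unfold build
  simp only [mem_image, mem_filter, mem_product, mem_range, Prod.mk.injEq, Prod.exists]
  constructor
  · rintro ⟨a, b, h, h1, h2⟩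
    have : a = i := by omega
    have : b = j := by omega
    subst_vars
    exact h
  · intro h
    exact ⟨i, j, h, rfl, rfl⟩

lemma build_subset (m n : ℕ) (G : ℕ → Finset ℕ) :
    build m n G ⊆ Finset.Icc 1 (m : ℤ) ×ˢ Finset.Icc 1 (n : ℤ) := by
  intro p hp
  unfold build at hp
  simp only [mem_image, mem_filter, mem_product, mem_range, Prod.exists] at hp
  obtain ⟨a, b, h, rfl⟩ := hp
  simp only [mem_product, mem_Icc]
  omega

lemma card_build (m n : ℕ) (G : ℕ → Finset ℕ) (P : ℤ × ℤ → Prop) [DecidablePred P] :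
    ((build m n G).filter P).card =
      ∑ j ∈ range n, ((range m).filter fun (i : ℕ) => i ∈ G j ∧ P ((i : ℤ) + 1, (j : ℤ) + 1)).card := by
  unfold build
  rw [filter_image, card_image_of_injective, filter_filter, card_filter, sum_product_right]
  · apply sum_congr rfl
    intro j _
    rw [card_filter]
  · rintro ⟨a, b⟩ ⟨c, d⟩ h
    simp only [Prod.mk.injEq] at h ⊢
    omega

lemma rowSum_build {m n : ℕ} {G : ℕ → Finset ℕ} {k : ℕ} (hk : k < m) :
    rowSum (build m n G) ((k : ℤ) + 1) = rcount n G k := by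
  unfold rowSum rcount
  rw [card_build]
  apply sum_congr rfl
  intro j _
  split_ifs with h
  · rw [card_eq_one]
    refine ⟨k, ?_⟩
    ext i
    simp only [mem_filter, mem_range, mem_singleton]
    constructor
    · intro h2; omega
    · rintro rfl; exact ⟨hk, h, rfl⟩
  · rw [card_eq_zero, filter_eq_empty_iff]
    rintro i _ ⟨h1, h2⟩
    have : i = k := by omega
    subst this
    exact h h1

lemma colSum_build {m n : ℕ} {G : ℕ → Finset ℕ} {k : ℕ} (hk : k < n)
    (hG : ∀ j < n, G j ⊆ range m) :
    colSum (build m n G) ((k : ℤ) + 1) = (G k).card := by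
  unfold colSum
  rw [card_build, sum_eq_single k]
  · congr 1
    ext i
    simp only [mem_filter, and_true]
    exact ⟨fun h => h.2, fun h => ⟨hG k hk h, h⟩⟩
  · intro j _ hj
    rw [card_eq_zero, filter_eq_empty_iff]
    rintro i _ ⟨h1, h2⟩
    simp only at h2
    omega
  · intro h
    exact absurd (mem_range.2 hk) h

lemma V_build (m n : ℕ) (G : ℕ → Finset ℕ) :
    ((build m n G).filter fun p => (p.1 - 1, p.2) ∉ build m n G).card
      ≤ Vtot n G + rcount n G 0 := by
  rw [card_build]
  unfold Vtot rcount
  rw [← sum_add_distrib]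
  apply sum_le_sum
  intro j hj
  rw [mem_range] at hj
  have h0 : (if 0 ∈ G j then 1 else 0) = ((G j).filter fun i => i = 0).card := by
    rw [filter_eq']
    split_ifs <;> simp
  unfold vcost
  rw [h0]
  refine (card_le_card ?_).trans (card_union_le _ _)
  intro i hi
  simp only [mem_filter, mem_range, mem_union] at hi ⊢
  obtain ⟨h1, h2, h3⟩ := hi
  by_cases hi0 : i = 0
  · right; exact ⟨h2, hi0⟩
  · left
    refine ⟨h2, hi0, fun h4 => h3 ?_⟩
    have e : ((i : ℤ) + 1 - 1) = ((i - 1 : ℕ) : ℤ) + 1 := by omega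
    rw [e, mem_build]
    exact ⟨⟨by omega, hj⟩, h4⟩

lemma H_build (m n : ℕ) (G : ℕ → Finset ℕ) (hn : 1 ≤ n) :
    ((build m n G).filter fun p => (p.1, p.2 - 1) ∉ build m n G).card
      ≤ Htot n G + (G 0).card := by
  rw [card_build]
  unfold Htot
  obtain ⟨k, rfl⟩ := Nat.exists_eq_add_of_le' hn
  rw [sum_range_succ']
  apply Nat.add_le_add
  · rw [Nat.add_sub_cancel]
    apply sum_le_sum
    intro j hj
    rw [mem_range] at hj
    apply card_le_card
    intro i hi
    simp only [mem_filter, mem_range, mem_sdiff] at hi ⊢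
    obtain ⟨h1, h2, h3⟩ := hi
    refine ⟨h2, fun h4 => h3 ?_⟩
    have e : (((j + 1 : ℕ) : ℤ) + 1 - 1) = (j : ℤ) + 1 := by omega
    rw [e, mem_build]
    exact ⟨⟨by omega, by omega⟩, h4⟩
  · apply card_le_card
    intro i hi
    exact (mem_filter.1 hi).2.1

lemma sum_Icc_shift (N : ℕ) (f : ℕ → ℕ) : ∑ i ∈ Icc 1 N, f i = ∑ i ∈ range N, f (i + 1) := by
  induction N with
  | zero => simp
  | succ k ih => rw [sum_Icc_succ_top (by omega), ih, sum_range_succ]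

lemma rowSum_eq {m n : ℕ} {F : Finset (ℤ × ℤ)}
    (hF : F ⊆ Finset.Icc 1 (m : ℤ) ×ˢ Finset.Icc 1 (n : ℤ)) (i : ℕ) :
    rowSum F ((i : ℤ) + 1) =
      ∑ j ∈ range n, if ((i : ℤ) + 1, (j : ℤ) + 1) ∈ F then 1 else 0 := by
  rw [← card_filter]
  unfold rowSum
  symm
  apply card_bij (fun (j : ℕ) _ => ((i : ℤ) + 1, (j : ℤ) + 1))
  · intro j hj
    exact mem_filter.2 ⟨(mem_filter.1 hj).2, rfl⟩
  · intro j _ k _ h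
    simp only [Prod.mk.injEq] at h
    omega
  · rintro ⟨a, b⟩ hp
    rw [mem_filter] at hp
    obtain ⟨h1, h2⟩ := hp
    simp only at h2
    subst h2
    have h3 := hF h1
    simp only [mem_product, mem_Icc] at h3
    have e : ((b - 1).toNat : ℤ) + 1 = b := by omega
    refine ⟨(b - 1).toNat, ?_, by rw [e]⟩
    rw [mem_filter, mem_range, e]
    exact ⟨by omega, h1⟩

lemma colSum_eq {m n : ℕ} {F : Finset (ℤ × ℤ)}
    (hF : F ⊆ Finset.Icc 1 (m : ℤ) ×ˢ Finset.Icc 1 (n : ℤ)) (j : ℕ) :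
    colSum F ((j : ℤ) + 1) =
      ∑ i ∈ range m, if ((i : ℤ) + 1, (j : ℤ) + 1) ∈ F then 1 else 0 := by
  rw [← card_filter]
  unfold colSum
  symm
  apply card_bij (fun (i : ℕ) _ => ((i : ℤ) + 1, (j : ℤ) + 1))
  · intro i hi
    exact mem_filter.2 ⟨(mem_filter.1 hi).2, rfl⟩
  · intro i _ k _ h
    simp only [Prod.mk.injEq] at h
    omega
  · rintro ⟨a, b⟩ hp
    rw [mem_filter] at hp
    obtain ⟨h1, h2⟩ := hp
    simp only at h2
    subst h2
    have h3 := hF h1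
    simp only [mem_product, mem_Icc] at h3
    have e : ((a - 1).toNat : ℤ) + 1 = a := by omega
    refine ⟨(a - 1).toNat, ?_, by rw [e]⟩
    rw [mem_filter, mem_range, e]
    exact ⟨by omega, h1⟩

lemma sum_ind_le (t : ℕ) (P : ℕ → Prop) [DecidablePred P] :
    ∑ j ∈ range t, (if P j then 1 else 0) ≤ t := by
  rw [← card_filter]
  exact (card_filter_le _ _).trans (card_range t).le

lemma sum_lcount (m t : ℕ) (R : ℕ → ℕ) :
    ∑ j ∈ range t, lcount m R j = ∑ i ∈ range m, min t (R i) := by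
  unfold lcount
  rw [sum_comm]
  apply sum_congr rfl
  intro i _
  rw [← card_filter]
  have : (range t).filter (fun j => j < R i) = range (min t (R i)) := by
    ext; simp
  rw [this, card_range]

/-- For consistent monotone line sums (not necessarily normalized) with `n ≥ 2`, there
exists a set `F₂` with these line sums such that
`Lh F₂ ≤ min (2 r₁ + 2α) (2 r₁ + 2n - 2)` and `Lv F₂ ≤ 2 c₁ + 2α`, where
`2α = ∑_{i=1}^{max(m, c 1)} |rᵢ - bᵢ|` (with `rᵢ = 0` for `i > m`). -/
theorem exists_small_boundary_general (m n : ℕ) (r c : ℕ → ℕ)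
    (hm : 1 ≤ m) (hn : 2 ≤ n)
    (hr : ∀ i i' : ℕ, 1 ≤ i → i ≤ i' → i' ≤ m → r i' ≤ r i)
    (hc : ∀ j j' : ℕ, 1 ≤ j → j ≤ j' → j' ≤ n → c j' ≤ c j)
    (hr0 : ∀ i : ℕ, m < i → r i = 0)
    (hcons : ∃ F : Finset (ℤ × ℤ),
      F ⊆ Finset.Icc 1 (m : ℤ) ×ˢ Finset.Icc 1 (n : ℤ) ∧
      (∀ i ∈ Finset.Icc 1 m, rowSum F i = r i) ∧
      (∀ j ∈ Finset.Icc 1 n, colSum F j = c j))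
    (b : ℕ → ℕ)
    (hb : ∀ i : ℕ, b i = ((Finset.Icc 1 n).filter fun j => i ≤ c j).card) :
    ∃ F2 : Finset (ℤ × ℤ),
      F2 ⊆ Finset.Icc 1 (m : ℤ) ×ˢ Finset.Icc 1 (n : ℤ) ∧
      (∀ i ∈ Finset.Icc 1 m, rowSum F2 i = r i) ∧
      (∀ j ∈ Finset.Icc 1 n, colSum F2 j = c j) ∧
      Lh F2 ≤ min
        (2 * r 1 + ∑ i ∈ Finset.Icc 1 (max m (c 1)), ((r i : ℤ) - b i).natAbs)
        (2 * r 1 + 2 * n - 2) ∧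
      Lv F2 ≤ 2 * c 1 + ∑ i ∈ Finset.Icc 1 (max m (c 1)), ((r i : ℤ) - b i).natAbs := by
  obtain ⟨F, hF, hFr, hFc⟩ := hcons
  set N := max m (c 1) with hN
  let x : ℕ → ℕ → ℕ := fun i j => if ((i : ℤ) + 1, (j : ℤ) + 1) ∈ F then 1 else 0
  have hrx : ∀ i < m, r (i + 1) = ∑ j ∈ range n, x i j := by
    intro i hi
    rw [← hFr (i + 1) (mem_Icc.2 ⟨by omega, by omega⟩)]
    push_cast
    exact rowSum_eq hF i
  have hcx : ∀ j < n, c (j + 1) = ∑ i ∈ range m, x i j := by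
    intro j hj
    rw [← hFc (j + 1) (mem_Icc.2 ⟨by omega, by omega⟩)]
    push_cast
    exact colSum_eq hF j
  have hrn : ∀ i < m, r (i + 1) ≤ n := by
    intro i hi
    rw [hrx i hi]
    exact sum_ind_le _ _
  have hrn' : ∀ i, r (i + 1) ≤ n := by
    intro i
    by_cases hi : i < m
    · exact hrn i hi
    · rw [hr0 (i + 1) (by omega)]; omega
  have hR : ∀ i i', i ≤ i' → i' < m → r (i' + 1) ≤ r (i + 1) :=
    fun i i' h h' => hr _ _ (by omega) (by omega) (by omega)
  have hC : ∀ i i', i ≤ i' → i' < n → c (i' + 1) ≤ c (i + 1) :=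
    fun i i' h h' => hc _ _ (by omega) (by omega) (by omega)
  let l : ℕ → ℕ := lcount m (fun i => r (i + 1))
  have hyp : Hyp n l (fun j => c (j + 1)) := by
    have hpre : ∀ t ≤ n, ∑ j ∈ range t, c (j + 1) = ∑ i ∈ range m, ∑ j ∈ range t, x i j := by
      intro t ht
      rw [sum_comm]
      apply sum_congr rfl
      intro j hj
      exact hcx j (by have := mem_range.1 hj; omega)
    refine ⟨hC, ?_, ?_⟩
    · intro t ht
      refine (hpre t ht).le.trans ?_
      refine le_trans ?_ (sum_lcount m t _).ge
      apply sum_le_sum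
      intro i hi
      apply le_min (sum_ind_le _ _)
      rw [hrx i (mem_range.1 hi)]
      exact sum_le_sum_of_subset (range_subset_range.2 ht)
    · refine (hpre n le_rfl).trans ?_
      refine Eq.trans ?_ (sum_lcount m n _).symm
      apply sum_congr rfl
      intro i hi
      rw [min_eq_right (hrn i (mem_range.1 hi)), hrx i (mem_range.1 hi)]
  have hds : dsum n l (fun j => c (j + 1)) ≤ ∑ i ∈ Icc 1 N, ((r i : ℤ) - b i).natAbs := by
    have hbl : ∀ i, b (i + 1) = lcount n (fun j => c (j + 1)) i := by
      intro i
      rw [hb, card_filter, sum_Icc_shift]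
      rfl
    rw [sum_Icc_shift]
    have e : ∑ i ∈ range N, ((r (i + 1) : ℤ) - b (i + 1)).natAbs
        = ∑ i ∈ range N, Nat.dist (r (i + 1)) (b (i + 1)) := by
      apply sum_congr rfl
      intro i _
      unfold Nat.dist
      omega
    rw [e]
    apply dist_conj_le n N (fun i => r (i + 1)) (fun i => b (i + 1)) l (fun j => c (j + 1))
    · intro i _; exact hrn' i
    · intro i _; rw [hbl]; exact lcount_le _ _ _
    · intro j _
      apply sum_subset (range_subset_range.2 (le_max_left _ _))
      intro i _ hi
      rw [mem_range] at hi
      have h := hr0 (i + 1) (by omega)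
      simp [h]
    · intro j hj
      have key : ∀ i, j < b (i + 1) ↔ i < c (j + 1) := by
        intro i
        rw [hbl]
        exact lt_lcount_iff hC hj
      simp only [key]
      refine (sum_ind_lt _ _ ?_).symm
      have := hC 0 j (by omega) hj
      rw [zero_add] at this
      omega
  obtain ⟨G, g1, g2, g3, g4, g5⟩ := core_s12 n l _ hyp
  have hlr : ∀ i < m, lcount n l i = r (i + 1) := by
    intro i hi
    have key : ∀ j, i < l j ↔ j < r (i + 1) := fun j => lt_lcount_iff hR hi
    unfold lcount
    simp only [key]
    exact sum_ind_lt _ _ (hrn i hi)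
  have hGm : ∀ j < n, G j ⊆ range m := by
    intro j hj i hi
    rw [mem_range]
    by_contra hc2
    refine not_mem_of_empty (g2 i) ?_ j hj hi
    intro k _
    exact (lcount_le _ _ _).trans (by omega)
  have hr1 : rcount n G 0 = r 1 := by rw [g2, hlr 0 (by omega)]
  have hV := V_build m n G
  have hH := H_build m n G (by omega)
  have hLh := Lh_le (build m n G)
  have hLv := Lv_le (build m n G)
  have hc1 : (G 0).card = c 1 := g1 0 (by omega)
  refine ⟨build m n G, build_subset m n G, ?_, ?_, ?_, ?_⟩
  · intro i hi
    rw [mem_Icc] at hi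
    obtain ⟨k, rfl⟩ := Nat.exists_eq_add_of_le' hi.1
    push_cast
    rw [rowSum_build (by omega), g2, hlr k (by omega)]
  · intro j hj
    rw [mem_Icc] at hj
    obtain ⟨k, rfl⟩ := Nat.exists_eq_add_of_le' hj.1
    push_cast
    rw [colSum_build (by omega) hGm, g1 k (by omega)]
  · apply le_min <;> omega
  · omega
end
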